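/- Let H be either H1 or H2. For all integers k ≥ 1 and r with 0 ≤ r ≤ k such that k−r and r are both even, GR_k((k−r)K3, rH) = 5^((k−r)/2)·17^(r/2) + 1. -/

import Mathlib

open SimpleGraph

/-- A rainbow triangle in an edge-coloring of a complete graph: three distinct
vertices whose three pairwise edges receive three pairwise distinct colors. -/
def HasRainbowTriangle {n k : ℕ} (c : Fin n → Fin n → Fin k) : Prop :=
  ∃ u v w : Fin n, u ≠ v ∧ u ≠ w ∧ v ≠ w ∧
    c u v ≠ c u w ∧ c u v ≠ c v w ∧ c u w ≠ c v w

/-- A Gallai `k`-coloring of `K_n`: a symmetric edge-coloring with no rainbow triangle. -/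
def IsGallaiColoring {n k : ℕ} (c : Fin n → Fin n → Fin k) : Prop :=
  (∀ u v, c u v = c v u) ∧ ¬ HasRainbowTriangle c

/-- A monochromatic copy of the graph `F` in color `i`: an injection of the vertices
of `F` into the vertices of `K_n` mapping every edge of `F` to an edge colored `i`. -/
def HasMonoCopy {V : Type} (F : SimpleGraph V) {n k : ℕ}
    (c : Fin n → Fin n → Fin k) (i : Fin k) : Prop :=
  ∃ f : V → Fin n, Function.Injective f ∧ ∀ a b, F.Adj a b → c (f a) (f b) = i

/-- The Gallai-Ramsey number `GR(F₁, …, F_k)`: the least `n` such that every Gallai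
`k`-coloring of `K_n` contains, for some color `i`, a monochromatic copy of `Fᵢ`
in color `i`. -/
noncomputable def GR (k : ℕ) (F : Fin k → Σ V : Type, SimpleGraph V) : ℕ :=
  sInf {n : ℕ | ∀ c : Fin n → Fin n → Fin k, IsGallaiColoring c →
    ∃ i : Fin k, HasMonoCopy (F i).2 c i}

/-- The triangle `K₃`. -/
def GK3 : SimpleGraph (Fin 3) := ⊤

/-- The path `P₃` on three vertices (edges 0–1 and 1–2). -/
def GP3 : SimpleGraph (Fin 3) := SimpleGraph.fromRel (fun a _ => a = 1)

/-- `H₁`: a `K₄` on `{0,1,2,3}` together with the extra vertex `4` adjacent to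
exactly the vertex `3`. -/
def GH1 : SimpleGraph (Fin 5) :=
  SimpleGraph.fromRel (fun a b => (a ≠ 4 ∧ b ≠ 4) ∨ (a = 3 ∧ b = 4))

/-- `H₂`: `K₅` minus the two edges 0–1 and 1–2 of a path on three vertices. -/
def GH2 : SimpleGraph (Fin 5) :=
  (⊤ : SimpleGraph (Fin 5)) \
    SimpleGraph.fromRel (fun a b => (a = 0 ∧ b = 1) ∨ (a = 1 ∧ b = 2))

/-- `H₃`: `K₅` minus the edge 0–1. -/
def GH3 : SimpleGraph (Fin 5) :=
  (⊤ : SimpleGraph (Fin 5)) \ SimpleGraph.fromRel (fun a b => a = 0 ∧ b = 1)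
/-- The family of graphs for `GR_k((k-r)K₃, rH)`: the graph `H` in each of the first
`r` colors and the triangle `K₃` in each of the remaining `k - r` colors. -/
def mixKH (k r : ℕ) (H : SimpleGraph (Fin 5)) : Fin k → Σ V : Type, SimpleGraph V :=
  fun i => if (i : ℕ) < r then ⟨Fin 5, H⟩ else ⟨Fin 3, GK3⟩

/-!
In a Gallai colouring the vertices split into at least two parts such that at most two colours
occur between the parts and each pair of parts is joined by a single colour. One vertex from each
part gives a 2-coloured complete graph, so the Ramsey numbers `R(K₃, K₃) = 6`, `R(K₃, H) = 9` and
`R(H, H) = 18` bound the number of parts, while a colour between the parts is partly used up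
inside each of them. Induction then yields the multiplicative bound `5` for every two triangle
colours and `17` for every two colours forbidding `H`. Lexicographic products of the pentagon and
of the Paley graph of order `17` show that the bound is attained.
-/

namespace GallaiRamsey

open Finset

/-! ### Two-colour Ramsey numbers -/

section Cliques

variable {V : Type*} {G : SimpleGraph V} {S T : Set V} {A B : Finset V} {m n d : ℕ}

/-- In `G`, no vertex of `S` has more than `d` neighbours in an `n`-clique of `S` avoiding it.
For `(n, d) = (4, 0)`, `(4, 1)` and `(3, 0)` this says that `S` spans no copy of `H₁`, of `H₂`,
and of the paw (a triangle with a pendant edge), respectively. -/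
def AugmentedCliqueFreeOn (G : SimpleGraph V) (S : Set V) (n d : ℕ) : Prop :=
  ∀ ⦃K L : Finset V⦄, ↑K ⊆ S → G.IsNClique n K → L ⊆ K →
    ∀ v ∈ S, v ∉ K → (∀ x ∈ L, G.Adj v x) → #L ≤ d

theorem AugmentedCliqueFreeOn.subset (hTS : T ⊆ S) (h : AugmentedCliqueFreeOn G S n d) :
    AugmentedCliqueFreeOn G T n d :=
  fun _ _ hK hclique hL v hv => h (hK.trans hTS) hclique hL v (hTS hv)

theorem AugmentedCliqueFreeOn.of_succ {b : V} (h : AugmentedCliqueFreeOn G S (n + 1) (d + 1))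
    (hb : b ∈ S) : AugmentedCliqueFreeOn G (S ∩ G.neighborSet b) n d := by
  classical
  intro K L hK hclique hL v hv hvK hvL
  have hbL : b ∉ L := fun hbL => G.irrefl (hK (hL hbL)).2
  have hKS : ↑(insert b K) ⊆ S := by
    rw [coe_insert]
    exact Set.insert_subset hb (hK.trans Set.inter_subset_left)
  have hcard := h hKS (hclique.insert fun x hx => (hK hx).2) (insert_subset_insert b hL) v hv.1
    (by simp [hvK, G.ne_of_adj hv.2.symm]) (by simpa [hv.2.symm] using hvL)
  rw [card_insert_of_notMem hbL] at hcard
  omega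

theorem subset_inter_neighborSet {s t : Set V} (h : G.IsCompleteBetween s t) (hs : s ⊆ S) {b : V}
    (hb : b ∈ t) : s ⊆ S ∩ G.neighborSet b :=
  fun _ hx => ⟨hs hx, (h hx hb).symm⟩

theorem cliqueFreeOn_of_isCompleteBetween {s t : Set V} (hS : G.CliqueFreeOn S (n + 1))
    (h : G.IsCompleteBetween s t) (hs : s ⊆ S) (ht : t ⊆ S) (hne : t.Nonempty) :
    G.CliqueFreeOn s n := by
  obtain ⟨b, hb⟩ := hne
  exact CliqueFreeOn.subset G (subset_inter_neighborSet h hs hb) (CliqueFreeOn.of_succ G hS (ht hb))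

theorem AugmentedCliqueFreeOn.of_isCompleteBetween {s t : Set V}
    (hS : AugmentedCliqueFreeOn G S (n + 1) (d + 1)) (h : G.IsCompleteBetween s t) (hs : s ⊆ S)
    (ht : t ⊆ S) (hne : t.Nonempty) : AugmentedCliqueFreeOn G s n d := by
  obtain ⟨b, hb⟩ := hne
  exact (hS.of_succ (ht hb)).subset (subset_inter_neighborSet h hs hb)

theorem AugmentedCliqueFreeOn.card_le_of_isCompleteBetween
    (hS : AugmentedCliqueFreeOn G S (m + n) d) (hdn : d < n)
    (h : G.IsCompleteBetween (A : Set V) B) (hA : ↑A ⊆ S) (hB : ↑B ⊆ S)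
    (hm : ¬G.CliqueFreeOn A m) (hn : ¬G.CliqueFreeOn B n) : #A ≤ m := by
  classical
  simp only [CliqueFreeOn, not_forall, not_not] at hm hn
  obtain ⟨K, hKA, hK⟩ := hm
  obtain ⟨L, hLB, hL⟩ := hn
  have hKL : G.IsNClique (m + n) (K ∪ L) := by
    refine ⟨?_, ?_⟩
    · rw [coe_union]
      exact Set.pairwise_union.2 ⟨hK.isClique, hL.isClique,
        fun a ha b hb _ => ⟨h (hKA ha) (hLB hb), (h (hKA ha) (hLB hb)).symm⟩⟩
    · rw [card_union_of_disjoint (disjoint_coe.1 (h.disjoint.mono hKA hLB)), hK.card_eq,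
        hL.card_eq]
  have hAK : A ⊆ K := by
    intro v hv
    by_contra hvK
    have hvL : v ∉ L := fun hvL => G.irrefl (h hv (hLB hvL))
    have := hS (by grind) hKL subset_union_right v (hA hv) (by simp [hvK, hvL])
      fun x hx => h hv (hLB hx)
    exact absurd (hL.card_eq ▸ this) hdn.not_ge
  exact (card_le_card hAK).trans hK.card_eq.le

theorem AugmentedCliqueFreeOn.subset_of_mem {K M : Finset V} {x : V}
    (h : AugmentedCliqueFreeOn G S n 0) (hKS : ↑K ⊆ S) (hMS : ↑M ⊆ S) (hK : G.IsNClique n K)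
    (hM : G.IsClique M) (hxK : x ∈ K) (hxM : x ∈ M) : M ⊆ K := by
  intro v hvM
  by_contra hvK
  have hvx : G.Adj v x := hM hvM hxM (ne_of_mem_of_not_mem hxK hvK).symm
  simpa using h hKS hK (singleton_subset_iff.2 hxK) v (hMS hvM) hvK (by simpa using hvx)

/-- The `(n + 1)`-cliques are pairwise disjoint here; delete one vertex from each. -/
theorem AugmentedCliqueFreeOn.exists_cliqueFreeOn_subset
    (h : AugmentedCliqueFreeOn G (A : Set V) (n + 1) 0) :
    ∃ T ⊆ A, G.CliqueFreeOn T (n + 1) ∧ n * #A ≤ (n + 1) * #T := by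
  classical
  induction A using Finset.strongInduction with
  | H A ih =>
  by_cases hfree : G.CliqueFreeOn A (n + 1)
  · exact ⟨A, Subset.rfl, hfree, by gcongr; omega⟩
  simp only [CliqueFreeOn, not_forall, not_not] at hfree
  obtain ⟨K, hKA, hK⟩ := hfree
  rw [coe_subset] at hKA
  obtain ⟨z, hz⟩ : K.Nonempty := card_pos.1 (by rw [hK.card_eq]; omega)
  obtain ⟨T, hTA, hT, hcard⟩ := ih (A \ K) (sdiff_ssubset hKA ⟨z, hz⟩)
    (h.subset (coe_subset.2 sdiff_subset))
  have hunion : T ∪ K.erase z ⊆ A := by grind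
  refine ⟨T ∪ K.erase z, hunion, fun M hM hMclique => ?_, ?_⟩
  · rw [coe_subset] at hM
    have hdisj : Disjoint M K := by
      refine disjoint_left.2 fun x hxM hxK => ?_
      have hMK := h.subset_of_mem (coe_subset.2 hKA) (coe_subset.2 (hM.trans hunion)) hK
        hMclique.isClique hxK hxM
      have hzM : z ∉ M := fun hzM => by grind
      have := card_lt_card (ssubset_of_subset_of_ne hMK (by grind))
      rw [hMclique.card_eq, hK.card_eq] at this
      exact this.false
    refine hT (coe_subset.2 fun x hx => ?_) hMclique
    have := disjoint_left.1 hdisj hx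
    grind
  · have hdisj : Disjoint T (K.erase z) := disjoint_left.2 (by grind)
    have hcardA := card_sdiff_add_card_eq_card hKA
    rw [card_union_of_disjoint hdisj, card_erase_of_mem hz, hK.card_eq, Nat.add_sub_cancel]
    rw [hK.card_eq] at hcardA
    nlinarith

end Cliques

section Ramsey

variable {V : Type*} {G R : SimpleGraph V} {S : Finset V} {n : ℕ}

theorem card_lt_of_cliqueFreeOn_two (hS : (G ⊔ R).IsClique S) (hG : G.CliqueFreeOn S 2)
    (hR : R.CliqueFreeOn S n) : #S < n := by
  by_contra! hn
  obtain ⟨K, hKS, hK⟩ := exists_subset_card_eq hn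
  refine hR (coe_subset.2 hKS) ⟨fun x hx y hy hxy => ?_, hK⟩
  exact (hS (hKS hx) (hKS hy) hxy).resolve_left ((cliqueFreeOn_two G).1 hG (hKS hx) (hKS hy) hxy)

open Classical in
/-- The neighbours of `v` in `S`. -/
noncomputable def neighborsIn (G : SimpleGraph V) (S : Finset V) (v : V) : Finset V :=
  {x ∈ S | G.Adj v x}

theorem neighborsIn_subset (v : V) : neighborsIn G S v ⊆ S := by
  classical exact filter_subset _ _

theorem mem_neighborsIn {v x : V} : x ∈ neighborsIn G S v ↔ x ∈ S ∧ G.Adj v x := by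
  simp [neighborsIn]

theorem cliqueFreeOn_neighborsIn {v : V} (hv : v ∈ S) (hG : G.CliqueFreeOn S (n + 1)) :
    G.CliqueFreeOn (neighborsIn G S v) n :=
  CliqueFreeOn.subset G (fun x hx => by simpa [mem_neighborsIn] using hx)
    (CliqueFreeOn.of_succ G hG hv)

theorem card_le_card_neighborsIn {v : V} (hS : (G ⊔ R).IsClique S) (hv : v ∈ S) :
    #S ≤ #(neighborsIn G S v) + #(neighborsIn R S v) + 1 := by
  classical
  have hsub : S.erase v ⊆ neighborsIn G S v ∪ neighborsIn R S v := by
    intro x hx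
    have := hS hv (mem_of_mem_erase hx) (ne_of_mem_erase hx).symm
    simpa [mem_neighborsIn, mem_of_mem_erase hx] using this
  have := (card_le_card hsub).trans (card_union_le _ _)
  rw [card_erase_of_mem hv] at this
  omega

theorem isClique_neighborsIn (hS : (G ⊔ R).IsClique S) (H : SimpleGraph V) (v : V) :
    (G ⊔ R).IsClique (neighborsIn H S v) :=
  hS.subset (coe_subset.2 (neighborsIn_subset v))

theorem cliqueFreeOn_neighborsIn_right (H : SimpleGraph V) (v : V) (hG : G.CliqueFreeOn S n) :
    G.CliqueFreeOn (neighborsIn H S v) n :=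
  CliqueFreeOn.subset G (coe_subset.2 (neighborsIn_subset v)) hG

theorem card_neighborsIn_lt (hS : (G ⊔ R).IsClique S) (hG : G.CliqueFreeOn S 3)
    (hR : R.CliqueFreeOn S n) {v : V} (hv : v ∈ S) : #(neighborsIn G S v) < n :=
  card_lt_of_cliqueFreeOn_two (isClique_neighborsIn hS G v) (cliqueFreeOn_neighborsIn hv hG)
    (cliqueFreeOn_neighborsIn_right G v hR)

theorem card_le_five (hS : (G ⊔ R).IsClique S) (hG : G.CliqueFreeOn S 3)
    (hR : R.CliqueFreeOn S 3) : #S ≤ 5 := by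
  obtain rfl | ⟨v, hv⟩ := S.eq_empty_or_nonempty
  · simp
  have h1 := card_neighborsIn_lt hS hG hR hv
  have h2 := card_neighborsIn_lt (sup_comm G R ▸ hS) hR hG hv
  have := card_le_card_neighborsIn hS hv
  omega

theorem card_neighborsIn_eq_degree [Fintype S] [DecidableRel (G.induce (S : Set V)).Adj]
    (v : S) : #(neighborsIn G S v) = (G.induce (S : Set V)).degree v := by
  rw [← card_neighborFinset_eq_degree, ← card_map (Function.Embedding.subtype _)]
  congr 1
  ext x
  simp [mem_neighborsIn, and_comm]

theorem exists_even_card_neighborsIn (hS : Odd #S) : ∃ v ∈ S, Even #(neighborsIn G S v) := by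
  classical
  by_contra! h
  have hodd : ∀ v : (S : Set V), Odd ((G.induce (S : Set V)).degree v) := fun v =>
    card_neighborsIn_eq_degree (G := G) v ▸ Nat.not_even_iff_odd.1 (h v v.2)
  have := (G.induce (S : Set V)).even_card_odd_degree_vertices
  rw [filter_true_of_mem fun v _ => hodd v] at this
  simp [Nat.not_even_iff_odd.2 hS] at this

theorem card_le_eight (hS : (G ⊔ R).IsClique S) (hG : G.CliqueFreeOn S 3)
    (hR : R.CliqueFreeOn S 4) : #S ≤ 8 := by
  by_contra! hcard
  obtain ⟨T, hTS, hT⟩ := exists_subset_card_eq (Nat.succ_le_of_lt hcard)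
  rw [← coe_subset] at hTS
  replace hS := hS.subset hTS
  replace hG := CliqueFreeOn.subset G hTS hG
  replace hR := CliqueFreeOn.subset R hTS hR
  obtain ⟨v, hv, heven⟩ := exists_even_card_neighborsIn (G := G) (S := T) (by rw [hT]; decide)
  have h1 := card_neighborsIn_lt hS hG hR hv
  have h2 := card_le_five (isClique_neighborsIn hS R v) (cliqueFreeOn_neighborsIn_right R v hG)
    (cliqueFreeOn_neighborsIn hv hR)
  have := card_le_card_neighborsIn hS hv
  grind

theorem card_le_seventeen (hS : (G ⊔ R).IsClique S) (hG : G.CliqueFreeOn S 4)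
    (hR : R.CliqueFreeOn S 4) : #S ≤ 17 := by
  obtain rfl | ⟨v, hv⟩ := S.eq_empty_or_nonempty
  · simp
  have h1 := card_le_eight (isClique_neighborsIn hS G v) (cliqueFreeOn_neighborsIn hv hG)
    (cliqueFreeOn_neighborsIn_right G v hR)
  have h2 := card_le_eight (isClique_neighborsIn (sup_comm G R ▸ hS) R v)
    (cliqueFreeOn_neighborsIn hv hR) (cliqueFreeOn_neighborsIn_right R v hG)
  have := card_le_card_neighborsIn hS hv
  omega

theorem AugmentedCliqueFreeOn.cliqueFreeOn_succ {S : Set V} {d : ℕ}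
    (h : AugmentedCliqueFreeOn G S n d) (hd : d < n) : G.CliqueFreeOn S (n + 1) := by
  classical
  intro K hKS hK
  obtain ⟨v, hv⟩ : K.Nonempty := card_pos.1 (by rw [hK.card_eq]; omega)
  have hKv : G.IsNClique n (K.erase v) := hK.erase_of_mem hv
  have := h ((coe_subset.2 (erase_subset v K)).trans hKS) hKv Subset.rfl v (hKS hv)
    (notMem_erase v K) fun x hx => hK.isClique hv (mem_of_mem_erase hx) (ne_of_mem_erase hx).symm
  rw [hKv.card_eq] at this
  omega

theorem AugmentedCliqueFreeOn.exists_forall_adj {K : Finset V} {u : V}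
    (hS : (G ⊔ R).IsClique S) (hG : AugmentedCliqueFreeOn G (S : Set V) n 1) (hKS : K ⊆ S)
    (hK : G.IsNClique n K) (hu : u ∈ S) (huK : u ∉ K) :
    ∃ e, ∀ x ∈ K, x ≠ e → R.Adj u x := by
  classical
  have hadj {x : V} (hx : x ∈ K) : G.Adj u x ∨ R.Adj u x :=
    hS hu (hKS hx) (ne_of_mem_of_not_mem hx huK).symm
  by_cases he : ∃ e ∈ K, G.Adj u e
  · obtain ⟨e, heK, hue⟩ := he
    refine ⟨e, fun x hxK hxe => (hadj hxK).resolve_left fun hux => ?_⟩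
    have := hG (L := {x, e}) (coe_subset.2 hKS) hK (by grind) u hu huK (by simp [hue, hux])
    rw [card_pair hxe] at this
    omega
  · push Not at he
    exact ⟨u, fun x hxK _ => (hadj hxK).resolve_left (he x hxK)⟩

theorem exists_mem_notMem_of_isNClique {K E : Finset V} (hK : G.IsNClique n K) (hE : #E < n) :
    ∃ x ∈ K, x ∉ E :=
  exists_mem_notMem_of_card_lt_card (hK.card_eq ▸ hE)

theorem card_le_eight_of_augmentedCliqueFreeOn (hS : (G ⊔ R).IsClique S)
    (hG : G.CliqueFreeOn S 3) (hR : AugmentedCliqueFreeOn R (S : Set V) 4 1) : #S ≤ 8 := by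
  classical
  by_cases hfree : R.CliqueFreeOn S 4
  · exact card_le_eight hS hG hfree
  simp only [CliqueFreeOn, not_forall, not_not] at hfree
  obtain ⟨K, hKS, hK⟩ := hfree
  rw [coe_subset] at hKS
  have hsub : (↑(S \ K) : Set V) ⊆ S := coe_subset.2 sdiff_subset
  have hG' : G.CliqueFreeOn ↑(S \ K) 2 := by
    rw [cliqueFreeOn_two]
    intro u hu v hv huv hGuv
    simp only [coe_sdiff, Set.mem_sdiff, mem_coe] at hu hv
    obtain ⟨e, he⟩ := hR.exists_forall_adj (sup_comm G R ▸ hS) hKS hK hu.1 hu.2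
    obtain ⟨f, hf⟩ := hR.exists_forall_adj (sup_comm G R ▸ hS) hKS hK hv.1 hv.2
    obtain ⟨q, hqK, hq⟩ := exists_mem_notMem_of_isNClique (E := {e, f}) hK
      (card_le_two.trans_lt (by decide))
    have htri : G.IsNClique 3 {u, v, q} :=
      is3Clique_triple_iff.2 ⟨hGuv, he q hqK (by grind), hf q hqK (by grind)⟩
    exact hG (by grind) htri
  have := card_lt_of_cliqueFreeOn_two (hS.subset hsub) hG'
    (CliqueFreeOn.subset R hsub (hR.cliqueFreeOn_succ (by decide)))
  have := card_sdiff_add_card_eq_card hKS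
  rw [hK.card_eq] at this
  omega

/-- Outside a `4`-clique `K` of `G` there is no triangle of `R`: all but at most three vertices
of `K` would extend it to a `4`-clique of `R`, and a further vertex of `K` would be joined to two
vertices of the latter. -/
theorem AugmentedCliqueFreeOn.cliqueFreeOn_sdiff {K : Finset V} [DecidableEq V]
    (hS : (G ⊔ R).IsClique S) (hG : AugmentedCliqueFreeOn G (S : Set V) 4 1)
    (hR : AugmentedCliqueFreeOn R (S : Set V) 4 1) (hKS : K ⊆ S) (hK : G.IsNClique 4 K) :
    R.CliqueFreeOn ↑(S \ K) 3 := by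
  intro T hT hclique
  rw [coe_subset] at hT
  have hTS := hT.trans sdiff_subset
  have hex : ∀ x ∈ T, ∃ e, ∀ y ∈ K, y ≠ e → R.Adj x y := fun x hx =>
    hG.exists_forall_adj hS hKS hK (hTS hx) (mem_sdiff.1 (hT hx)).2
  choose! e he using hex
  obtain ⟨p, hpK, hp⟩ := exists_mem_notMem_of_isNClique (E := T.image e) hK
    (card_image_le.trans_lt (hclique.card_eq ▸ by decide))
  have hp' : R.IsNClique 4 (insert p T) := hclique.insert fun x hx =>
    (he x hx p hpK (by grind)).symm
  obtain ⟨u, v, w, huv, -, -, rfl⟩ := is3Clique_iff.1 hclique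
  obtain ⟨q, hqK, hq⟩ := exists_mem_notMem_of_isNClique (E := {p, e u, e v}) hK
    (card_le_three.trans_lt (by decide))
  simp only [mem_insert, mem_singleton, not_or] at hq
  have hqT : q ∉ insert p ({u, v, w} : Finset V) := by grind
  have hsub : insert p ({u, v, w} : Finset V) ⊆ S := insert_subset (hKS hpK) hTS
  have := hR (L := {u, v}) (coe_subset.2 hsub) hp' (by grind) q (hKS hqK) hqT
    (by simp [(he u (by simp) q hqK hq.2.1).symm, (he v (by simp) q hqK hq.2.2).symm])
  rw [card_pair huv.ne] at this
  omega

theorem card_le_twelve_of_isNClique {K : Finset V}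
    (hS : (G ⊔ R).IsClique S) (hG : AugmentedCliqueFreeOn G (S : Set V) 4 1)
    (hR : AugmentedCliqueFreeOn R (S : Set V) 4 1) (hKS : ↑K ⊆ (S : Set V))
    (hK : G.IsNClique 4 K) : #S ≤ 12 := by
  classical
  rw [coe_subset] at hKS
  have hsub : (↑(S \ K) : Set V) ⊆ S := coe_subset.2 sdiff_subset
  have := card_le_eight_of_augmentedCliqueFreeOn ((sup_comm G R ▸ hS).subset hsub)
    (hG.cliqueFreeOn_sdiff hS hR hKS hK) (hG.subset hsub)
  have := card_sdiff_add_card_eq_card hKS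
  rw [hK.card_eq] at this
  omega

theorem card_le_seventeen_of_augmentedCliqueFreeOn (hS : (G ⊔ R).IsClique S)
    (hG : AugmentedCliqueFreeOn G (S : Set V) 4 1)
    (hR : AugmentedCliqueFreeOn R (S : Set V) 4 1) : #S ≤ 17 := by
  by_contra! hcard
  have hG' : G.CliqueFreeOn S 4 := fun _ hKS hK =>
    absurd (card_le_twelve_of_isNClique hS hG hR hKS hK) (by omega)
  have hR' : R.CliqueFreeOn S 4 := fun _ hKS hK =>
    absurd (card_le_twelve_of_isNClique (sup_comm G R ▸ hS) hR hG hKS hK) (by omega)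
  exact hcard.not_ge (card_le_seventeen hS hG' hR')

end Ramsey

/-! ### Gallai partitions -/

section Colorings

variable {α κ : Type*} {c : Sym2 α → κ} {S : Finset α} {T : Set κ} {i j m : κ} {a b v x y z : α}

/-- The graph of the edges of colour `i`; the values of `c` on the diagonal are ignored. -/
def colorGraph (c : Sym2 α → κ) (i : κ) : SimpleGraph α :=
  fromEdgeSet (c ⁻¹' {i})

theorem colorGraph_adj : (colorGraph c i).Adj x y ↔ c s(x, y) = i ∧ x ≠ y := by
  simp [colorGraph]

/-- The Gallai condition: every triangle has two edges of the same colour. -/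
def RainbowTriangleFree (c : Sym2 α → κ) : Prop :=
  ∀ ⦃x y z⦄, x ≠ y → x ≠ z → y ≠ z →
    c s(x, y) = c s(x, z) ∨ c s(x, y) = c s(y, z) ∨ c s(x, z) = c s(y, z)

/-- The graph of the edges inside `S` whose colour is not in `T`. Between two of its components
all edges have colours in `T`; its components inside `S` are the parts of a Gallai partition. -/
def avoidGraph (c : Sym2 α → κ) (S : Finset α) (T : Set κ) : SimpleGraph α :=
  fromEdgeSet {e | (∀ x ∈ e, x ∈ S) ∧ c e ∉ T}

theorem avoidGraph_adj :
    (avoidGraph c S T).Adj x y ↔ ((x ∈ S ∧ y ∈ S) ∧ c s(x, y) ∉ T) ∧ x ≠ y := by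
  simp [avoidGraph]

theorem color_mem_of_not_reachable (hx : x ∈ S) (hy : y ∈ S)
    (h : ¬(avoidGraph c S T).Reachable x y) : c s(x, y) ∈ T := by
  by_contra hc
  have hne : x ≠ y := fun hxy => h (hxy ▸ Reachable.refl x)
  exact h (Adj.reachable (avoidGraph_adj.2 ⟨⟨⟨hx, hy⟩, hc⟩, hne⟩))

/-- Edges from a vertex `z` to two vertices of a component not containing `z` have the same
colour, because adjacent vertices of the component form a non-rainbow triangle with `z`. -/
theorem RainbowTriangleFree.color_eq_of_reachable (hc : RainbowTriangleFree c)
    (hxy : (avoidGraph c S T).Reachable x y) (hz : z ∈ S)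
    (hxz : ¬(avoidGraph c S T).Reachable x z) : c s(x, z) = c s(y, z) := by
  obtain ⟨p⟩ := hxy
  induction p with
  | nil => rfl
  | @cons x u y hadj _ ih =>
    have huz : ¬(avoidGraph c S T).Reachable u z := fun h => hxz (hadj.reachable.trans h)
    obtain ⟨⟨⟨hx, hu⟩, hxu⟩, hne⟩ := avoidGraph_adj.1 hadj
    have hxzT := color_mem_of_not_reachable hx hz hxz
    have huzT := color_mem_of_not_reachable hu hz huz
    have hxz_ne : x ≠ z := fun h => hxz (h ▸ Reachable.refl x)
    have huz_ne : u ≠ z := fun h => huz (h ▸ Reachable.refl u)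
    rw [← ih huz]
    rcases hc hne hxz_ne huz_ne with h | h | h
    · exact absurd (h ▸ hxzT) hxu
    · exact absurd (h ▸ huzT) hxu
    · exact h

theorem RainbowTriangleFree.color_eq_of_not_reachable (hc : RainbowTriangleFree c) (hv : v ∉ S)
    (hx : x ∈ S) (hy : y ∈ S) (hxy : ¬(avoidGraph c S T).Reachable x y)
    (hvx : c s(v, x) ∉ T) (hvy : c s(v, y) ∉ T) : c s(v, x) = c s(v, y) := by
  have hxy_mem := color_mem_of_not_reachable hx hy hxy
  have hne : x ≠ y := fun h => hxy (h ▸ Reachable.refl x)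
  rcases hc (ne_of_mem_of_not_mem hx hv).symm (ne_of_mem_of_not_mem hy hv).symm hne with h | h | h
  · exact h
  · exact absurd (h ▸ hxy_mem) hvx
  · exact absurd (h ▸ hxy_mem) hvy

/-- Deleting the colours in `T` disconnects `S`. For `T = {i}` this is a cut of `S` with all edges
of colour `i`, for `T = {i, j}` it is a nontrivial Gallai partition of `S`. -/
def Splits (c : Sym2 α → κ) (S : Finset α) (T : Set κ) : Prop :=
  ∃ a ∈ S, ∃ b ∈ S, ¬(avoidGraph c S T).Reachable a b

theorem Splits.exists_not_reachable (h : Splits c S T) (x : α) :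
    ∃ y ∈ S, ¬(avoidGraph c S T).Reachable x y := by
  obtain ⟨a, ha, b, hb, hab⟩ := h
  by_contra! hx
  exact hab ((hx a ha).symm.trans (hx b hb))

theorem splits_of_forall_mem {A : Set α} (ha : a ∈ S) (haA : a ∈ A) (hb : b ∈ S) (hbA : b ∉ A)
    (h : ∀ x ∈ S, x ∈ A → ∀ y ∈ S, y ∉ A → c s(x, y) ∈ T) : Splits c S T := by
  refine ⟨a, ha, b, hb, ?_⟩
  rintro ⟨p⟩
  induction p with
  | nil => exact hbA haA
  | @cons x u y hadj _ ih =>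
    obtain ⟨⟨⟨hx, hu⟩, hxu⟩, -⟩ := avoidGraph_adj.1 hadj
    exact ih hu (by_contra fun huA => hxu (h x hx haA u hu huA)) hb hbA

/-- The last step of a walk from `x` to `v` starts at such a vertex `y`. -/
theorem exists_reachable_color_notMem [DecidableEq α] (hv : v ∉ S)
    (hsplit : ¬Splits c (insert v S) T) (hx : x ∈ S) :
    ∃ y ∈ S, (avoidGraph c S T).Reachable x y ∧ c s(v, y) ∉ T := by
  simp only [Splits, not_exists, not_and, not_not] at hsplit
  obtain ⟨p⟩ := hsplit x (mem_insert_of_mem hx) v (mem_insert_self v S)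
  clear hsplit
  generalize hS' : insert v S = S' at p
  induction p with
  | nil => exact absurd hx hv
  | @cons x u v hadj _ ih =>
    obtain ⟨⟨⟨-, hu⟩, hxu⟩, hne⟩ := avoidGraph_adj.1 hadj
    rcases mem_insert.1 (hS' ▸ hu) with rfl | hu
    · exact ⟨x, hx, Reachable.refl x, Sym2.eq_swap ▸ hxu⟩
    · obtain ⟨y, hy, huy, hvy⟩ := ih hv hu hS'
      have hadj' : (avoidGraph c S T).Adj x u := avoidGraph_adj.2 ⟨⟨⟨hx, hu⟩, hxu⟩, hne⟩
      exact ⟨y, hy, hadj'.reachable.trans huy, hvy⟩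

section Insert

variable [DecidableEq α] (hc : RainbowTriangleFree c) (hv : v ∉ S) (hS : Splits c S T)
  (hsplit : ¬Splits c (insert v S) T)

include hc hv hsplit

theorem color_eq_of_color_mem_of_not_reachable (hx : x ∈ S) (hz : z ∈ S)
    (hxz : ¬(avoidGraph c S T).Reachable x z) (hvx : c s(v, x) ∈ T) : c s(v, x) = c s(x, z) := by
  obtain ⟨w, hw, hzw, hvw⟩ := exists_reachable_color_notMem hv hsplit hz
  have hzx : ¬(avoidGraph c S T).Reachable z x := fun h => hxz h.symm
  have hwx : c s(x, w) = c s(x, z) := by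
    rw [Sym2.eq_swap, ← hc.color_eq_of_reachable hzw hx hzx, Sym2.eq_swap]
  have hxz_mem := color_mem_of_not_reachable hx hz hxz
  have hxw_ne : x ≠ w := fun h => hzx (h ▸ hzw)
  rcases hc (ne_of_mem_of_not_mem hx hv).symm (ne_of_mem_of_not_mem hw hv).symm hxw_ne with
    h | h | h
  · exact absurd (h ▸ hvx) hvw
  · exact h.trans hwx
  · exact absurd (h ▸ hwx ▸ hxz_mem) hvw

include hS

theorem color_eq_of_color_mem (hx : x ∈ S) (hy : y ∈ S) (hvx : c s(v, x) ∈ T)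
    (hvy : c s(v, y) ∈ T) : c s(v, x) = c s(v, y) := by
  by_cases hxy : (avoidGraph c S T).Reachable x y
  · obtain ⟨z, hz, hxz⟩ := hS.exists_not_reachable x
    rw [color_eq_of_color_mem_of_not_reachable hc hv hsplit hx hz hxz hvx,
      color_eq_of_color_mem_of_not_reachable hc hv hsplit hy hz (fun h => hxz (hxy.trans h)) hvy,
      hc.color_eq_of_reachable hxy hz hxz]
  · rw [color_eq_of_color_mem_of_not_reachable hc hv hsplit hx hy hxy hvx,
      color_eq_of_color_mem_of_not_reachable hc hv hsplit hy hx (fun h => hxy h.symm) hvy,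
      Sym2.eq_swap]

theorem color_eq_of_color_notMem (hx : x ∈ S) (hy : y ∈ S) (hvx : c s(v, x) ∉ T)
    (hvy : c s(v, y) ∉ T) : c s(v, x) = c s(v, y) := by
  by_cases hxy : (avoidGraph c S T).Reachable x y
  · obtain ⟨z, hz, hxz⟩ := hS.exists_not_reachable x
    obtain ⟨w, hw, hzw, hvw⟩ := exists_reachable_color_notMem hv hsplit hz
    have hxw : ¬(avoidGraph c S T).Reachable x w := fun h => hxz (h.trans hzw.symm)
    exact (hc.color_eq_of_not_reachable hv hx hw hxw hvx hvw).trans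
      (hc.color_eq_of_not_reachable hv hy hw (fun h => hxw (hxy.trans h)) hvy hvw).symm
  · exact hc.color_eq_of_not_reachable hv hx hy hxy hvx hvy

end Insert

theorem Splits.splits_insert_or [DecidableEq α] (hc : RainbowTriangleFree c) (hv : v ∉ S)
    (hS : Splits c S T) :
    Splits c (insert v S) T ∨ ∃ i j, Splits c (insert v S) {i, j} := by
  refine or_iff_not_imp_left.2 fun hsplit => ?_
  have ⟨a, ha, _⟩ := hS
  obtain ⟨y, hy, -, hvy⟩ := exists_reachable_color_notMem hv hsplit ha
  obtain ⟨i, hi⟩ : ∃ i, ∀ x ∈ S, c s(v, x) ∈ T → c s(v, x) = i := by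
    by_cases hT : ∃ x ∈ S, c s(v, x) ∈ T
    · obtain ⟨x, hx, hvx⟩ := hT
      exact ⟨c s(v, x), fun z hz hvz => color_eq_of_color_mem hc hv hS hsplit hz hx hvz hvx⟩
    · exact ⟨c s(v, y), fun z hz hvz => absurd ⟨z, hz, hvz⟩ hT⟩
  refine ⟨i, c s(v, y), splits_of_forall_mem (A := {v}) (mem_insert_self v S) rfl
    (mem_insert_of_mem ha) (ne_of_mem_of_not_mem ha hv) ?_⟩
  intro w _ hw x hx hxv
  rw [Set.mem_singleton_iff.1 hw]
  have hxS : x ∈ S := mem_of_mem_insert_of_ne hx hxv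
  by_cases hvx : c s(v, x) ∈ T
  · exact Or.inl (hi x hxS hvx)
  · exact Or.inr (color_eq_of_color_notMem hc hv hS hsplit hxS hy hvx hvy)

/-- Gallai's theorem: adding a vertex preserves the property of splitting along two colours. -/
theorem RainbowTriangleFree.exists_splits (hc : RainbowTriangleFree c) (hS : S.Nontrivial) :
    ∃ i j, Splits c S {i, j} := by
  classical
  induction S using Finset.induction with
  | empty => simp at hS
  | insert v S hv ih =>
    by_cases hS' : S.Nontrivial
    · obtain ⟨i, j, hij⟩ := ih hS'
      exact (hij.splits_insert_or hc hv).elim (fun h => ⟨i, j, h⟩) id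
    · obtain ⟨a, rfl⟩ : ∃ a, S = {a} := by
        obtain rfl | h := S.eq_empty_or_nonempty
        · simp at hS
        · exact h.exists_eq_singleton_or_nontrivial.resolve_right hS'
      exact ⟨c s(v, a), c s(v, a), splits_of_forall_mem (A := {v}) (mem_insert_self v {a}) rfl
        (mem_insert_of_mem (mem_singleton_self a)) (by simpa [eq_comm] using hv)
        (by simp +contextual)⟩

open Classical in
/-- The part of `a` in the partition of `S` into components of `avoidGraph c S T`. -/
noncomputable def part (c : Sym2 α → κ) (S : Finset α) (T : Set κ) (a : α) : Finset α :=
  {x ∈ S | (avoidGraph c S T).Reachable a x}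

open Classical in
/-- The union of the parts joined to the part of `a` in colour `m`. -/
noncomputable def nbhd (c : Sym2 α → κ) (S : Finset α) (T : Set κ) (m : κ) (a : α) : Finset α :=
  {x ∈ S | ¬(avoidGraph c S T).Reachable a x ∧ c s(a, x) = m}

theorem mem_part : x ∈ part c S T a ↔ x ∈ S ∧ (avoidGraph c S T).Reachable a x := by
  simp [part]

theorem mem_nbhd :
    x ∈ nbhd c S T m a ↔ x ∈ S ∧ ¬(avoidGraph c S T).Reachable a x ∧ c s(a, x) = m := by
  simp [nbhd]

theorem self_mem_part (ha : a ∈ S) : a ∈ part c S T a :=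
  mem_part.2 ⟨ha, Reachable.refl a⟩

theorem part_subset : part c S T a ⊆ S := by
  classical exact filter_subset _ _

theorem nbhd_subset : nbhd c S T m a ⊆ S := by
  classical exact filter_subset _ _

theorem isCompleteBetween_part_nbhd (hc : RainbowTriangleFree c) :
    (colorGraph c m).IsCompleteBetween (part c S T a : Set α) (nbhd c S T m a) := by
  intro x hx y hy
  obtain ⟨-, hax⟩ := mem_part.1 hx
  obtain ⟨hyS, hay, rfl⟩ := mem_nbhd.1 hy
  rw [colorGraph_adj]
  exact ⟨(hc.color_eq_of_reachable hax hyS hay).symm, fun hxy => hay (hxy ▸ hax)⟩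

theorem card_le_card_part_add (ha : a ∈ S) :
    #S ≤ #(part c S {i} a) + #(nbhd c S {i} i a) := by
  classical
  refine (card_le_card fun x hx => ?_).trans (card_union_le _ _)
  have := color_mem_of_not_reachable (c := c) (T := {i}) ha hx
  rw [mem_union, mem_part, mem_nbhd]
  tauto

theorem card_le_card_part_add_add (ha : a ∈ S) :
    #S ≤ #(part c S {i, j} a) + #(nbhd c S {i, j} i a) + #(nbhd c S {i, j} j a) := by
  classical
  have hsub : S ⊆ part c S {i, j} a ∪ nbhd c S {i, j} i a ∪ nbhd c S {i, j} j a := by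
    intro x hx
    have := color_mem_of_not_reachable (c := c) (T := {i, j}) ha hx
    simp only [mem_union, mem_part, mem_nbhd, Set.mem_insert_iff, Set.mem_singleton_iff] at this ⊢
    tauto
  have := (card_le_card hsub).trans (card_union_le _ _)
  have := card_union_le (part c S {i, j} a) (nbhd c S {i, j} i a)
  omega

theorem Splits.nbhd_nonempty (h : Splits c S {i}) (ha : a ∈ S) : (nbhd c S {i} i a).Nonempty := by
  obtain ⟨x, hx, hax⟩ := h.exists_not_reachable a
  exact ⟨x, mem_nbhd.2 ⟨hx, hax, color_mem_of_not_reachable ha hx hax⟩⟩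

theorem Splits.splits_singleton (hc : RainbowTriangleFree c) (h : Splits c S {i, j}) (ha : a ∈ S)
    (hi : nbhd c S {i, j} i a = ∅) : Splits c S {j} := by
  obtain ⟨b, hb, hab⟩ := h.exists_not_reachable a
  refine splits_of_forall_mem (A := part c S {i, j} a) ha (self_mem_part ha) hb
    (fun hbA => hab (mem_part.1 hbA).2) fun x _ hxA y hy hyA => ?_
  have hax := (mem_part.1 hxA).2
  have hay : ¬(avoidGraph c S {i, j}).Reachable a y := fun hay => hyA (mem_part.2 ⟨hy, hay⟩)
  rw [← hc.color_eq_of_reachable hax hy hay]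
  refine (color_mem_of_not_reachable ha hy hay).resolve_left fun hay_eq => ?_
  simpa [hi] using mem_nbhd.2 ⟨hy, hay, hay_eq⟩

/-- The components of `avoidGraph c S {i, j}` partition `S` nontrivially, and every part is joined
to other parts in both of the colours `i` and `j` of the reduced graph. -/
structure IsGallaiPartition (c : Sym2 α → κ) (S : Finset α) (i j : κ) : Prop where
  splits : Splits c S {i, j}
  nbhd_left_nonempty : ∀ a ∈ S, (nbhd c S {i, j} i a).Nonempty
  nbhd_right_nonempty : ∀ a ∈ S, (nbhd c S {i, j} j a).Nonempty

theorem IsGallaiPartition.symm (h : IsGallaiPartition c S i j) : IsGallaiPartition c S j i where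
  splits := Set.pair_comm i j ▸ h.splits
  nbhd_left_nonempty := Set.pair_comm i j ▸ h.nbhd_right_nonempty
  nbhd_right_nonempty := Set.pair_comm i j ▸ h.nbhd_left_nonempty

theorem RainbowTriangleFree.exists_splits_singleton_or_isGallaiPartition
    (hc : RainbowTriangleFree c) (hS : S.Nontrivial) :
    (∃ i, Splits c S {i}) ∨ ∃ i j, i ≠ j ∧ IsGallaiPartition c S i j := by
  refine or_iff_not_imp_left.2 fun hcut => ?_
  push Not at hcut
  obtain ⟨i, j, hij⟩ := hc.exists_splits hS
  refine ⟨i, j, ?_, hij, fun a ha => ?_, fun a ha => ?_⟩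
  · rintro rfl
    exact hcut i (Set.pair_eq_singleton i ▸ hij)
  · exact nonempty_iff_ne_empty.2 fun hi => hcut j (hij.splits_singleton hc ha hi)
  · rw [Set.pair_comm] at hij ⊢
    exact nonempty_iff_ne_empty.2 fun hj => hcut i (hij.splits_singleton hc ha hj)

end Colorings

section Transversal

variable {α β κ : Type*} {c : Sym2 α → κ} {S : Finset α} {i j : κ} {m N : ℕ}

theorem card_le_mul_of_forall_injOn [DecidableEq β] {f : α → β}
    (hfib : ∀ a ∈ S, #{x ∈ S | f x = f a} ≤ N) (hinj : ∀ M ⊆ S, Set.InjOn f M → #M ≤ m) :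
    #S ≤ N * m := by
  obtain ⟨M, hMS, hM, himage⟩ := exists_subset_injOn_image_eq_of_surjOn (f := f) (s := S)
    (t := S.image f) (by simp [Set.SurjOn])
  calc #S ≤ N * #(S.image f) := card_le_mul_card_image S N fun y hy => by
        obtain ⟨a, ha, rfl⟩ := mem_image.1 hy
        exact hfib a ha
    _ = N * #M := by rw [← himage, card_image_of_injOn hM]
    _ ≤ N * m := Nat.mul_le_mul_left N (hinj M hMS hM)

/-- Representatives of the parts of a Gallai partition span a clique in the two colours between
the parts, so Ramsey's theorem bounds the number of parts. -/
theorem card_le_mul_of_forall_isClique (hpart : ∀ a ∈ S, #(part c S {i, j} a) ≤ N)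
    (hclique : ∀ M ⊆ S, (colorGraph c i ⊔ colorGraph c j).IsClique M → #M ≤ m) :
    #S ≤ N * m := by
  classical
  refine card_le_mul_of_forall_injOn (f := (avoidGraph c S {i, j}).connectedComponentMk)
    (fun a ha => ?_) fun M hMS hM => hclique M hMS fun x hx y hy hxy => ?_
  · convert hpart a ha using 2
    ext x
    simp [mem_part, reachable_comm]
  · have hxy' : ¬(avoidGraph c S {i, j}).Reachable x y := fun h =>
      hxy (hM hx hy (ConnectedComponent.sound h))
    simpa [colorGraph_adj, hxy] using color_mem_of_not_reachable (hMS hx) (hMS hy) hxy'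

end Transversal

/-! ### The upper bound -/

section Bound

/-- The largest order of a Gallai colouring without triangles in `p` of its colours and without
copies of `H` in the other `q` colours, see `GR_mixKH_even_even_general`. -/
def gallaiBound (p q : ℕ) : ℕ :=
  5 ^ (p / 2) * 2 ^ (p % 2) * (17 ^ (q / 2) * 4 ^ (q % 2))

variable {p p' q q' : ℕ}

theorem gallaiBound_pos (p q : ℕ) : 0 < gallaiBound p q := by
  unfold gallaiBound
  positivity

theorem gallaiBound_of_even (hp : Even p) (hq : Even q) :
    gallaiBound p q = 5 ^ (p / 2) * 17 ^ (q / 2) := by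
  simp [gallaiBound, Nat.even_iff.1 hp, Nat.even_iff.1 hq]

theorem gallaiBound_add_two_left (p q : ℕ) : gallaiBound (p + 2) q = 5 * gallaiBound p q := by
  simp only [gallaiBound, Nat.add_div_right p two_pos, Nat.add_mod_right, pow_succ]
  ring

theorem gallaiBound_add_two_right (p q : ℕ) : gallaiBound p (q + 2) = 17 * gallaiBound p q := by
  simp only [gallaiBound, Nat.add_div_right q two_pos, Nat.add_mod_right, pow_succ]
  ring

theorem gallaiBound_succ_left (p : ℕ) : (∀ q, gallaiBound (p + 1) q = 2 * gallaiBound p q) ∨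
    ∀ q, 2 * gallaiBound (p + 1) q = 5 * gallaiBound p q := by
  have heven (r q : ℕ) : gallaiBound (2 * r + 1) q = 2 * gallaiBound (2 * r) q := by
    have : (2 * r + 1) / 2 = r := by omega
    simp only [gallaiBound, this, Nat.mul_add_mod, Nat.mul_mod_right,
      Nat.mul_div_cancel_left r two_pos]
    ring
  obtain ⟨r, rfl | rfl⟩ := p.even_or_odd'
  · exact Or.inl (heven r)
  · refine Or.inr fun q => ?_
    rw [gallaiBound_add_two_left, heven]
    ring

theorem gallaiBound_succ_right (q : ℕ) : (∀ p, gallaiBound p (q + 1) = 4 * gallaiBound p q) ∨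
    ∀ p, 4 * gallaiBound p (q + 1) = 17 * gallaiBound p q := by
  have heven (p r : ℕ) : gallaiBound p (2 * r + 1) = 4 * gallaiBound p (2 * r) := by
    have : (2 * r + 1) / 2 = r := by omega
    simp only [gallaiBound, this, Nat.mul_add_mod, Nat.mul_mod_right,
      Nat.mul_div_cancel_left r two_pos]
    ring
  obtain ⟨r, rfl | rfl⟩ := q.even_or_odd'
  · exact Or.inl fun p => heven p r
  · refine Or.inr fun p => ?_
    rw [gallaiBound_add_two_right, heven]
    ring

theorem gallaiBound_mono (hp : p ≤ p') (hq : q ≤ q') : gallaiBound p q ≤ gallaiBound p' q' := by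
  have hleft : Monotone fun p => gallaiBound p q := monotone_nat_of_le_succ fun n => by
    rcases gallaiBound_succ_left n with h | h <;> have := h q <;> omega
  have hright : Monotone (gallaiBound p') := monotone_nat_of_le_succ fun n => by
    rcases gallaiBound_succ_right n with h | h <;> have := h p' <;> omega
  exact (hleft hp).trans (hright hq)

end Bound

section Admissible

variable {α κ : Type*} {c : Sym2 α → κ} {S A : Finset α} {P Q : Finset κ} {i : κ}

/-- The edges of `S` are coloured with `P ∪ Q` so that no colour in `P` contains a triangle, and
no colour in `Q` contains a copy of `H₂`. -/
structure Admissible (c : Sym2 α → κ) (S : Finset α) (P Q : Finset κ) : Prop where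
  color_mem : ∀ x ∈ S, ∀ y ∈ S, x ≠ y → c s(x, y) ∈ P ∨ c s(x, y) ∈ Q
  cliqueFreeOn : ∀ i ∈ P, (colorGraph c i).CliqueFreeOn S 3
  augmentedCliqueFreeOn : ∀ i ∈ Q, AugmentedCliqueFreeOn (colorGraph c i) S 4 1

theorem Admissible.subset (h : Admissible c S P Q) (hA : A ⊆ S) : Admissible c A P Q where
  color_mem x hx y hy := h.color_mem x (hA hx) y (hA hy)
  cliqueFreeOn i hi := CliqueFreeOn.subset _ (coe_subset.2 hA) (h.cliqueFreeOn i hi)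
  augmentedCliqueFreeOn i hi := (h.augmentedCliqueFreeOn i hi).subset (coe_subset.2 hA)

theorem color_ne_of_cliqueFreeOn_two (h : (colorGraph c i).CliqueFreeOn S 2) {x y : α} (hx : x ∈ S)
    (hy : y ∈ S) (hxy : x ≠ y) : c s(x, y) ≠ i := fun hc =>
  (cliqueFreeOn_two _).1 h hx hy hxy (colorGraph_adj.2 ⟨hc, hxy⟩)

variable [DecidableEq κ]

theorem Admissible.of_cliqueFreeOn_two_left (h : Admissible c S (insert i P) Q)
    (hi : (colorGraph c i).CliqueFreeOn S 2) : Admissible c S P Q where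
  color_mem x hx y hy hxy := (h.color_mem x hx y hy hxy).imp_left
    fun hP => mem_of_mem_insert_of_ne hP (color_ne_of_cliqueFreeOn_two hi hx hy hxy)
  cliqueFreeOn j hj := h.cliqueFreeOn j (mem_insert_of_mem hj)
  augmentedCliqueFreeOn := h.augmentedCliqueFreeOn

theorem Admissible.of_cliqueFreeOn_two_right (h : Admissible c S P (insert i Q))
    (hi : (colorGraph c i).CliqueFreeOn S 2) : Admissible c S P Q where
  color_mem x hx y hy hxy := (h.color_mem x hx y hy hxy).imp_right
    fun hQ => mem_of_mem_insert_of_ne hQ (color_ne_of_cliqueFreeOn_two hi hx hy hxy)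
  cliqueFreeOn := h.cliqueFreeOn
  augmentedCliqueFreeOn j hj := h.augmentedCliqueFreeOn j (mem_insert_of_mem hj)

theorem Admissible.of_cliqueFreeOn_three (h : Admissible c S P (insert i Q))
    (hi : (colorGraph c i).CliqueFreeOn S 3) : Admissible c S (insert i P) Q where
  color_mem x hx y hy hxy := by
    have := h.color_mem x hx y hy hxy
    simp only [mem_insert] at this ⊢
    tauto
  cliqueFreeOn := forall_mem_insert _ _ _ |>.2 ⟨hi, h.cliqueFreeOn⟩
  augmentedCliqueFreeOn j hj := h.augmentedCliqueFreeOn j (mem_insert_of_mem hj)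

end Admissible

section Joined

variable {α κ : Type*} {c : Sym2 α → κ} {S A B A' : Finset α} {T : Set κ} {i m : κ} {a : α}

theorem Splits.part_ssubset (h : Splits c S T) (a : α) : part c S T a ⊂ S := by
  obtain ⟨y, hy, hay⟩ := h.exists_not_reachable a
  exact ssubset_of_subset_of_ne part_subset fun hpart => hay (mem_part.1 (hpart.symm ▸ hy)).2

theorem nbhd_ssubset (ha : a ∈ S) : nbhd c S T m a ⊂ S :=
  ssubset_of_subset_of_ne nbhd_subset fun h =>
    (mem_nbhd.1 (h.symm ▸ ha)).2.1 (Reachable.refl a)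

/-- `A` and `B` are subsets of `S` between which all edges have colour `i`. -/
structure JoinedIn (c : Sym2 α → κ) (S : Finset α) (i : κ) (A B : Finset α) : Prop where
  left_subset : A ⊆ S
  right_subset : B ⊆ S
  isCompleteBetween : (colorGraph c i).IsCompleteBetween (A : Set α) B

theorem joinedIn_part_nbhd (hc : RainbowTriangleFree c) (S : Finset α) (T : Set κ) (m : κ) (a : α) :
    JoinedIn c S m (part c S T a) (nbhd c S T m a) :=
  ⟨part_subset, nbhd_subset, isCompleteBetween_part_nbhd hc⟩

namespace JoinedIn

theorem symm (h : JoinedIn c S i A B) : JoinedIn c S i B A :=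
  ⟨h.right_subset, h.left_subset, h.isCompleteBetween.symm⟩

theorem mono_left (h : JoinedIn c S i A B) (hA : A' ⊆ A) : JoinedIn c S i A' B :=
  ⟨hA.trans h.left_subset, h.right_subset, fun _ hx _ hb => h.isCompleteBetween (hA hx) hb⟩

theorem left_ssubset (h : JoinedIn c S i A B) (hB : B.Nonempty) : A ⊂ S := by
  obtain ⟨b, hb⟩ := hB
  refine ssubset_of_subset_of_ne h.left_subset ?_
  rintro rfl
  exact (colorGraph c i).irrefl (h.isCompleteBetween (h.right_subset hb) hb)

theorem cliqueFreeOn_two (h : JoinedIn c S i A B) (hB : B.Nonempty)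
    (hS : (colorGraph c i).CliqueFreeOn S 3) : (colorGraph c i).CliqueFreeOn A 2 :=
  cliqueFreeOn_of_isCompleteBetween hS h.isCompleteBetween (coe_subset.2 h.left_subset)
    (coe_subset.2 h.right_subset) hB

theorem cliqueFreeOn_three (h : JoinedIn c S i A B) (hB : 1 < #B)
    (hS : AugmentedCliqueFreeOn (colorGraph c i) S 4 1) : (colorGraph c i).CliqueFreeOn A 3 := by
  by_contra hA
  refine hB.not_ge (hS.card_le_of_isCompleteBetween (m := 1) (n := 3) (by norm_num)
    h.isCompleteBetween.symm (coe_subset.2 h.right_subset) (coe_subset.2 h.left_subset) ?_ hA)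
  obtain ⟨b, hb⟩ := card_pos.1 (zero_lt_one.trans hB)
  exact fun hfree => hfree (singleton_subset_iff.2 hb) (isNClique_singleton.2 rfl)

theorem card_le_two (h : JoinedIn c S i A B)
    (hS : AugmentedCliqueFreeOn (colorGraph c i) S 4 1) (hA : ¬(colorGraph c i).CliqueFreeOn A 2)
    (hB : ¬(colorGraph c i).CliqueFreeOn B 2) : #A ≤ 2 :=
  hS.card_le_of_isCompleteBetween (m := 2) (n := 2) (by norm_num) h.isCompleteBetween
    (coe_subset.2 h.left_subset) (coe_subset.2 h.right_subset) hA hB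

/-- If `B` is a single vertex then `A` contains no triangle with a pendant edge in colour `i`. -/
theorem exists_subset_cliqueFreeOn_three (h : JoinedIn c S i A B) (hB : B.Nonempty)
    (hS : AugmentedCliqueFreeOn (colorGraph c i) S 4 1) :
    ∃ A' ⊆ A, (colorGraph c i).CliqueFreeOn A' 3 ∧ (A' = A ∨ #B = 1 ∧ 2 * #A ≤ 3 * #A') := by
  by_cases hB1 : #B = 1
  · have hpaw : AugmentedCliqueFreeOn (colorGraph c i) (A : Set α) 3 0 :=
      hS.of_isCompleteBetween h.isCompleteBetween (coe_subset.2 h.left_subset)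
        (coe_subset.2 h.right_subset) hB
    obtain ⟨A', hA', hfree, hcard⟩ := hpaw.exists_cliqueFreeOn_subset
    exact ⟨A', hA', hfree, Or.inr ⟨hB1, hcard⟩⟩
  · have : 0 < #B := hB.card_pos
    exact ⟨A, Subset.rfl, h.cliqueFreeOn_three (by omega) hS, Or.inl rfl⟩

end JoinedIn

end Joined

section Cut

variable {α κ : Type*} {c : Sym2 α → κ} {S A B : Finset α} {P Q : Finset κ} {i j : κ} {p q : ℕ}

/-- The upper bound for Gallai colourings holds on all proper subsets of `S`; this is the
hypothesis of the induction. -/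
def BoundedOnSSubsets (c : Sym2 α → κ) (S : Finset α) : Prop :=
  ∀ A ⊂ S, ∀ P Q, Admissible c A P Q → #A ≤ gallaiBound #P #Q

namespace BoundedOnSSubsets

theorem subset (h : BoundedOnSSubsets c S) (hA : A ⊆ S) : BoundedOnSSubsets c A :=
  fun A' hA' => h A' (hA'.trans_subset hA)

theorem card_le (h : BoundedOnSSubsets c S) (hAS : A ⊂ S) (hA : Admissible c A P Q) (hp : #P ≤ p)
    (hq : #Q ≤ q) : #A ≤ gallaiBound p q :=
  (h A hAS P Q hA).trans (gallaiBound_mono hp hq)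

variable [DecidableEq κ]

theorem card_le_of_joinedIn (h : BoundedOnSSubsets c S) (hjoin : JoinedIn c S i A B)
    (hB : B.Nonempty) (hS : AugmentedCliqueFreeOn (colorGraph c i) S 4 1)
    (hA : Admissible c A P (insert i Q)) :
    #A ≤ gallaiBound (#P + 1) #Q ∨ #B = 1 ∧ 2 * #A ≤ 3 * gallaiBound (#P + 1) #Q := by
  obtain ⟨A', hA', hfree, hcard⟩ := hjoin.exists_subset_cliqueFreeOn_three hB hS
  have hbound : #A' ≤ gallaiBound (#P + 1) #Q :=
    h.card_le (hA'.trans_ssubset (hjoin.left_ssubset hB))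
      ((hA.subset hA').of_cliqueFreeOn_three hfree) (card_insert_le i P) le_rfl
  rcases hcard with rfl | ⟨hB1, hcard⟩
  · exact Or.inl hbound
  · exact Or.inr ⟨hB1, by omega⟩

theorem card_le_of_joinedIn_of_joinedIn {C : Finset α} (h : BoundedOnSSubsets c S)
    (hi : JoinedIn c S i A B) (hj : JoinedIn c S j A C) (hB : B.Nonempty) (hC : C.Nonempty)
    (hS : Admissible c S P (insert i (insert j Q))) :
    #A ≤ gallaiBound (#P + 2) #Q ∨ (#B = 1 ∨ #C = 1) ∧ 2 * #A ≤ 3 * gallaiBound (#P + 2) #Q ∨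
      (#B = 1 ∧ #C = 1) ∧ 4 * #A ≤ 9 * gallaiBound (#P + 2) #Q := by
  obtain ⟨A₁, hA₁, hfree₁, hcard₁⟩ :=
    hi.exists_subset_cliqueFreeOn_three hB (hS.augmentedCliqueFreeOn i (by simp))
  obtain ⟨A₂, hA₂, hfree₂, hcard₂⟩ :=
    (hj.mono_left hA₁).exists_subset_cliqueFreeOn_three hC (hS.augmentedCliqueFreeOn j (by simp))
  have hadm : Admissible c A₂ (insert j (insert i P)) Q :=
    (((hS.subset (hA₁.trans hi.left_subset)).of_cliqueFreeOn_three hfree₁).subset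
      hA₂).of_cliqueFreeOn_three hfree₂
  have hbound : #A₂ ≤ gallaiBound (#P + 2) #Q :=
    h.card_le ((hA₂.trans hA₁).trans_ssubset (hi.left_ssubset hB)) hadm
      ((card_insert_le _ _).trans (by grw [card_insert_le])) le_rfl
  rcases hcard₁ with rfl | ⟨hB1, hcard₁⟩ <;> rcases hcard₂ with rfl | ⟨hC1, hcard₂⟩ <;> omega

theorem card_add_card_le_of_cliqueFreeOn_three (h : BoundedOnSSubsets c S)
    (hjoin : JoinedIn c S i A B) (hA : A.Nonempty) (hB : B.Nonempty)
    (hS : Admissible c S (insert i P) Q) : #A + #B ≤ 2 * gallaiBound #P #Q := by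
  have hfree := hS.cliqueFreeOn i (mem_insert_self i P)
  have hcard {A B : Finset α} (hjoin : JoinedIn c S i A B) (hB : B.Nonempty) :
      #A ≤ gallaiBound #P #Q :=
    h.card_le (hjoin.left_ssubset hB) ((hS.subset hjoin.left_subset).of_cliqueFreeOn_two_left
      (hjoin.cliqueFreeOn_two hB hfree)) le_rfl le_rfl
  have := hcard hjoin hB
  have := hcard hjoin.symm hA
  omega

theorem card_add_card_le_of_cliqueFreeOn_two (h : BoundedOnSSubsets c S)
    (hjoin : JoinedIn c S i A B) (hA : A.Nonempty) (hB : B.Nonempty)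
    (hS : Admissible c S P (insert i Q)) (hfree : (colorGraph c i).CliqueFreeOn A 2) :
    2 * (#A + #B) ≤ 2 + 3 * gallaiBound (#P + 1) #Q := by
  have hcardA : #A ≤ gallaiBound #P #Q :=
    h.card_le (hjoin.left_ssubset hB)
      ((hS.subset hjoin.left_subset).of_cliqueFreeOn_two_right hfree) le_rfl le_rfl
  have hcardB := h.card_le_of_joinedIn hjoin.symm hA
    (hS.augmentedCliqueFreeOn i (mem_insert_self i Q)) (hS.subset hjoin.right_subset)
  rcases gallaiBound_succ_left #P with hp | hp <;> have := hp #Q <;> omega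

theorem card_add_card_le (h : BoundedOnSSubsets c S) (hjoin : JoinedIn c S i A B)
    (hA : A.Nonempty) (hB : B.Nonempty) (hS : Admissible c S P (insert i Q)) :
    2 * (#A + #B) ≤ 2 + 3 * gallaiBound (#P + 1) #Q := by
  by_cases hfreeA : (colorGraph c i).CliqueFreeOn A 2
  · exact h.card_add_card_le_of_cliqueFreeOn_two hjoin hA hB hS hfreeA
  by_cases hfreeB : (colorGraph c i).CliqueFreeOn B 2
  · rw [add_comm #A]
    exact h.card_add_card_le_of_cliqueFreeOn_two hjoin.symm hB hA hS hfreeB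
  have hfree := hS.augmentedCliqueFreeOn i (mem_insert_self i Q)
  have := hjoin.card_le_two hfree hfreeA hfreeB
  have := hjoin.symm.card_le_two hfree hfreeB hfreeA
  have := gallaiBound_pos #P #Q
  rcases gallaiBound_succ_left #P with hp | hp <;> have := hp #Q <;> omega

variable (hc : RainbowTriangleFree c)

include hc

theorem card_le_of_splits_singleton_left (h : BoundedOnSSubsets c S) (hsplit : Splits c S {i})
    (hS : Admissible c S (insert i P) Q) : #S ≤ gallaiBound (#P + 1) #Q := by
  have ⟨a, ha, _⟩ := hsplit
  have := card_le_card_part_add (c := c) (i := i) ha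
  have := h.card_add_card_le_of_cliqueFreeOn_three (joinedIn_part_nbhd hc S {i} i a)
    ⟨a, self_mem_part ha⟩ (hsplit.nbhd_nonempty ha) hS
  rcases gallaiBound_succ_left #P with hp | hp <;> have := hp #Q <;> omega

theorem two_mul_card_le_of_splits_singleton (h : BoundedOnSSubsets c S) (hsplit : Splits c S {i})
    (hS : Admissible c S P (insert i Q)) : 2 * #S ≤ 2 + 3 * gallaiBound (#P + 1) #Q := by
  have ⟨a, ha, _⟩ := hsplit
  have := card_le_card_part_add (c := c) (i := i) ha
  have := h.card_add_card_le (joinedIn_part_nbhd hc S {i} i a)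
    ⟨a, self_mem_part ha⟩ (hsplit.nbhd_nonempty ha) hS
  omega

theorem card_le_of_splits_singleton_right (h : BoundedOnSSubsets c S) (hsplit : Splits c S {i})
    (hS : Admissible c S P (insert i Q)) : #S ≤ gallaiBound #P (#Q + 1) := by
  have := h.two_mul_card_le_of_splits_singleton hc hsplit hS
  have := gallaiBound_pos #P #Q
  rcases gallaiBound_succ_left #P with hp | hp <;> rcases gallaiBound_succ_right #Q with hq | hq <;>
    have := hp #Q <;> have := hq #P <;> omega

end BoundedOnSSubsets

end Cut

section Partition

variable {α κ : Type*} {c : Sym2 α → κ} {S : Finset α} {P Q : Finset κ} {T : Set κ} {i j m : κ}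
  {a b : α}

theorem part_subset_nbhd (hc : RainbowTriangleFree c) (ha : a ∈ S) (hb : b ∈ nbhd c S T m a) :
    part c S T b ⊆ nbhd c S T m a := by
  intro x hx
  obtain ⟨-, hab, hcol⟩ := mem_nbhd.1 hb
  obtain ⟨hxS, hbx⟩ := mem_part.1 hx
  refine mem_nbhd.2 ⟨hxS, fun hax => hab (hax.trans hbx.symm), ?_⟩
  rw [Sym2.eq_swap, ← hc.color_eq_of_reachable hbx ha fun hba => hab hba.symm, Sym2.eq_swap, hcol]

theorem one_lt_card_of_not_cliqueFreeOn_two (h : ¬(colorGraph c i).CliqueFreeOn S 2) : 1 < #S := by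
  simp only [CliqueFreeOn, not_forall, not_not] at h
  obtain ⟨K, hKS, hK⟩ := h
  exact hK.card_eq.ge.trans (card_le_card (coe_subset.1 hKS))

namespace IsGallaiPartition

variable [DecidableEq κ] (hg : IsGallaiPartition c S i j) (h : BoundedOnSSubsets c S)

include hg h

theorem card_le_seventeen_mul (hS : Admissible c S P (insert i (insert j Q)))
    (hparti : ∀ a ∈ S, (colorGraph c i).CliqueFreeOn (part c S {i, j} a) 2)
    (hpartj : ∀ a ∈ S, (colorGraph c j).CliqueFreeOn (part c S {i, j} a) 2) :
    #S ≤ gallaiBound #P #Q * 17 :=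
  card_le_mul_of_forall_isClique (fun a ha => h.card_le (hg.splits.part_ssubset a)
      (((hS.subset part_subset).of_cliqueFreeOn_two_right
        (hparti a ha)).of_cliqueFreeOn_two_right (hpartj a ha)) le_rfl le_rfl)
    fun _ hM hclique => card_le_seventeen_of_augmentedCliqueFreeOn hclique
      ((hS.augmentedCliqueFreeOn i (by simp)).subset hM)
      ((hS.augmentedCliqueFreeOn j (by simp)).subset hM)

variable (hc : RainbowTriangleFree c)

include hc

theorem card_le_of_left_left (hS : Admissible c S (insert i (insert j P)) Q) :
    #S ≤ gallaiBound (#P + 2) #Q := by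
  have hfreei := hS.cliqueFreeOn i (by simp)
  have hfreej := hS.cliqueFreeOn j (by simp)
  rw [gallaiBound_add_two_left, mul_comm]
  refine card_le_mul_of_forall_isClique (fun a ha => ?_) fun M hM hclique =>
    card_le_five hclique (CliqueFreeOn.subset _ hM hfreei) (CliqueFreeOn.subset _ hM hfreej)
  have hparti := (joinedIn_part_nbhd hc S {i, j} i a).cliqueFreeOn_two
    (hg.nbhd_left_nonempty a ha) hfreei
  have hpartj := (joinedIn_part_nbhd hc S {i, j} j a).cliqueFreeOn_two
    (hg.nbhd_right_nonempty a ha) hfreej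
  exact h.card_le (hg.splits.part_ssubset a) (((hS.subset part_subset).of_cliqueFreeOn_two_left
    hparti).of_cliqueFreeOn_two_left hpartj) le_rfl le_rfl

theorem card_le_eight_mul (hS : Admissible c S (insert i P) (insert j Q))
    (hpartj : ∀ a ∈ S, (colorGraph c j).CliqueFreeOn (part c S {i, j} a) 2) :
    #S ≤ gallaiBound #P #Q * 8 := by
  have hfreei := hS.cliqueFreeOn i (by simp)
  have hfreej := hS.augmentedCliqueFreeOn j (by simp)
  refine card_le_mul_of_forall_isClique (fun a ha => ?_) fun M hM hclique =>
    card_le_eight_of_augmentedCliqueFreeOn hclique (CliqueFreeOn.subset _ hM hfreei)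
      (hfreej.subset hM)
  have hparti := (joinedIn_part_nbhd hc S {i, j} i a).cliqueFreeOn_two
    (hg.nbhd_left_nonempty a ha) hfreei
  exact h.card_le (hg.splits.part_ssubset a) (((hS.subset part_subset).of_cliqueFreeOn_two_left
    hparti).of_cliqueFreeOn_two_right (hpartj a ha)) le_rfl le_rfl

omit hg in
theorem card_nbhd_le_left (hS : Admissible c S (insert i P) (insert j Q)) (ha : a ∈ S)
    (hpartj : ¬(colorGraph c j).CliqueFreeOn (part c S {i, j} a) 2) :
    #(nbhd c S {i, j} j a) ≤ gallaiBound (#P + 1) #Q := by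
  by_cases hnbhd : (colorGraph c j).CliqueFreeOn (nbhd c S {i, j} j a) 2
  · exact h.card_le (nbhd_ssubset ha) ((hS.subset nbhd_subset).of_cliqueFreeOn_two_right hnbhd)
      (card_insert_le i P) le_rfl
  · have := (joinedIn_part_nbhd hc S {i, j} j a).symm.card_le_two
      (hS.augmentedCliqueFreeOn j (by simp)) hnbhd hpartj
    have := gallaiBound_pos #P #Q
    rcases gallaiBound_succ_left #P with hp | hp <;> have := hp #Q <;> omega

theorem card_le_of_left_right_of_part (hS : Admissible c S (insert i P) (insert j Q))
    (ha : a ∈ S) (hpartj : ¬(colorGraph c j).CliqueFreeOn (part c S {i, j} a) 2) :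
    #S ≤ gallaiBound (#P + 1) (#Q + 1) := by
  have hfreei := hS.cliqueFreeOn i (by simp)
  have hjoini := joinedIn_part_nbhd hc S {i, j} i a
  have hcard := card_le_card_part_add_add (c := c) (i := i) (j := j) ha
  have hnbhdi : #(nbhd c S {i, j} i a) ≤ gallaiBound #P (#Q + 1) :=
    h.card_le (nbhd_ssubset ha) ((hS.subset nbhd_subset).of_cliqueFreeOn_two_left
      (hjoini.symm.cliqueFreeOn_two ⟨a, self_mem_part ha⟩ hfreei)) le_rfl (card_insert_le j Q)
  have hnbhdj := card_nbhd_le_left h hc hS ha hpartj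
  have hpart := h.card_le_of_joinedIn (joinedIn_part_nbhd hc S {i, j} j a)
    (hg.nbhd_right_nonempty a ha) (hS.augmentedCliqueFreeOn j (by simp))
    ((hS.subset part_subset).of_cliqueFreeOn_two_left
      (hjoini.cliqueFreeOn_two (hg.nbhd_left_nonempty a ha) hfreei))
  have := gallaiBound_pos #P #Q
  rcases gallaiBound_succ_left #P with hp | hp <;>
    rcases gallaiBound_succ_right #Q with hq | hq <;>
    have := hp #Q <;> have := hp (#Q + 1) <;> have := hq #P <;> omega

theorem card_le_of_left_right (hS : Admissible c S (insert i P) (insert j Q)) :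
    #S ≤ gallaiBound (#P + 1) (#Q + 1) := by
  by_cases hpart : ∀ a ∈ S, (colorGraph c j).CliqueFreeOn (part c S {i, j} a) 2
  · have := card_le_eight_mul hg h hc hS hpart
    rcases gallaiBound_succ_left #P with hp | hp <;>
      rcases gallaiBound_succ_right #Q with hq | hq <;>
      have := hp (#Q + 1) <;> have := hq #P <;> omega
  · push Not at hpart
    obtain ⟨a, ha, hpart⟩ := hpart
    exact card_le_of_left_right_of_part hg h hc hS ha hpart

theorem two_mul_card_nbhd_le_of_cliqueFreeOn (hS : Admissible c S P (insert i (insert j Q)))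
    (ha : a ∈ S) (hfree : (colorGraph c i).CliqueFreeOn (nbhd c S {i, j} i a) 2) :
    2 * #(nbhd c S {i, j} i a) ≤ 2 + 3 * gallaiBound (#P + 1) #Q := by
  have hnbhd : Admissible c (nbhd c S {i, j} i a) P (insert j Q) :=
    (hS.subset nbhd_subset).of_cliqueFreeOn_two_right hfree
  obtain ⟨b, hb⟩ := hg.nbhd_left_nonempty a ha
  have hbS := nbhd_subset hb
  have hsub : part c S {i, j} b ⊆ nbhd c S {i, j} i a := part_subset_nbhd hc ha hb
  rcases hsub.eq_or_ssubset with heq | hssub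
  · have := h.card_le_of_joinedIn (joinedIn_part_nbhd hc S {i, j} j b)
      (hg.nbhd_right_nonempty b hbS) (hS.augmentedCliqueFreeOn j (by simp)) (heq ▸ hnbhd)
    rw [heq] at this
    omega
  · obtain ⟨d, hd, hdb⟩ := exists_of_ssubset hssub
    refine (h.subset nbhd_subset).two_mul_card_le_of_splits_singleton hc
      (splits_of_forall_mem (A := part c S {i, j} b) hb (self_mem_part hbS) hd hdb
        fun x hx hxb y hy hyb => ?_) hnbhd
    have hxy : ¬(avoidGraph c S {i, j}).Reachable x y := fun hxy =>
      hyb (mem_part.2 ⟨nbhd_subset hy, (mem_part.1 hxb).2.trans hxy⟩)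
    exact (color_mem_of_not_reachable (nbhd_subset hx) (nbhd_subset hy) hxy).resolve_left
      (color_ne_of_cliqueFreeOn_two hfree hx hy (ne_of_mem_of_not_mem hxb hyb))

theorem two_mul_card_nbhd_le (hS : Admissible c S P (insert i (insert j Q))) (ha : a ∈ S)
    (hparti : ¬(colorGraph c i).CliqueFreeOn (part c S {i, j} a) 2) :
    2 * #(nbhd c S {i, j} i a) ≤ 2 + 3 * gallaiBound (#P + 1) #Q := by
  by_cases hnbhd : (colorGraph c i).CliqueFreeOn (nbhd c S {i, j} i a) 2
  · exact two_mul_card_nbhd_le_of_cliqueFreeOn hg h hc hS ha hnbhd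
  · have := (joinedIn_part_nbhd hc S {i, j} i a).symm.card_le_two
      (hS.augmentedCliqueFreeOn i (by simp)) hnbhd hparti
    have := gallaiBound_pos (#P + 1) #Q
    omega

omit hg in
theorem card_nbhd_le_right (hS : Admissible c S P (insert i (insert j Q))) (ha : a ∈ S)
    (hparti : ¬(colorGraph c i).CliqueFreeOn (part c S {i, j} a) 2) :
    #(nbhd c S {i, j} i a) ≤ gallaiBound #P (#Q + 1) := by
  by_cases hnbhd : (colorGraph c i).CliqueFreeOn (nbhd c S {i, j} i a) 2
  · exact h.card_le (nbhd_ssubset ha) ((hS.subset nbhd_subset).of_cliqueFreeOn_two_right hnbhd)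
      le_rfl (card_insert_le j Q)
  · have := (joinedIn_part_nbhd hc S {i, j} i a).symm.card_le_two
      (hS.augmentedCliqueFreeOn i (by simp)) hnbhd hparti
    have := gallaiBound_pos #P #Q
    rcases gallaiBound_succ_right #Q with hq | hq <;> have := hq #P <;> omega

theorem card_le_of_right_right_of_part (hS : Admissible c S P (insert i (insert j Q)))
    (ha : a ∈ S) (hparti : ¬(colorGraph c i).CliqueFreeOn (part c S {i, j} a) 2) :
    #S ≤ gallaiBound #P (#Q + 2) := by
  have hjoini := joinedIn_part_nbhd hc S {i, j} i a
  have hjoinj := joinedIn_part_nbhd hc S {i, j} j a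
  have hnbhdi := hg.nbhd_left_nonempty a ha
  have hcard := card_le_card_part_add_add (c := c) (i := i) (j := j) ha
  have hpos := gallaiBound_pos #P #Q
  rw [gallaiBound_add_two_right]
  by_cases hpartj : (colorGraph c j).CliqueFreeOn (part c S {i, j} a) 2
  · have hcardi := two_mul_card_nbhd_le hg h hc hS ha hparti
    have hcardj : #(nbhd c S {i, j} j a) ≤ gallaiBound (#P + 1) (#Q + 1) :=
      h.card_le (nbhd_ssubset ha) ((insert_comm i j Q ▸ hS.subset nbhd_subset).of_cliqueFreeOn_three
        (hjoinj.symm.cliqueFreeOn_three (one_lt_card_of_not_cliqueFreeOn_two hparti)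
          (hS.augmentedCliqueFreeOn j (by simp)))) (card_insert_le j P) (card_insert_le i Q)
    have hcardpart := h.card_le_of_joinedIn hjoini hnbhdi (hS.augmentedCliqueFreeOn i (by simp))
      ((insert_comm i j Q ▸ hS.subset part_subset).of_cliqueFreeOn_two_right hpartj)
    rcases gallaiBound_succ_left #P with hp | hp <;>
      rcases gallaiBound_succ_right #Q with hq | hq <;>
      have := hp #Q <;> have := hp (#Q + 1) <;> have := hq #P <;> omega
  · have hcardi := card_nbhd_le_right h hc hS ha hparti
    have hcardj : #(nbhd c S {i, j} j a) ≤ gallaiBound #P (#Q + 1) := by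
      rw [Set.pair_comm] at hpartj ⊢
      exact card_nbhd_le_right h hc (insert_comm i j Q ▸ hS) ha hpartj
    have hcardpart := h.card_le_of_joinedIn_of_joinedIn hjoini hjoinj hnbhdi
      (hg.nbhd_right_nonempty a ha) hS
    rw [gallaiBound_add_two_left] at hcardpart
    rcases gallaiBound_succ_right #Q with hq | hq <;> have := hq #P <;> omega

theorem card_le_of_right_right (hS : Admissible c S P (insert i (insert j Q))) :
    #S ≤ gallaiBound #P (#Q + 2) := by
  by_cases hparti : ∀ a ∈ S, (colorGraph c i).CliqueFreeOn (part c S {i, j} a) 2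
  · by_cases hpartj : ∀ a ∈ S, (colorGraph c j).CliqueFreeOn (part c S {i, j} a) 2
    · rw [gallaiBound_add_two_right, mul_comm]
      exact card_le_seventeen_mul hg h hS hparti hpartj
    · push Not at hpartj
      obtain ⟨a, ha, hpartj⟩ := hpartj
      exact card_le_of_right_right_of_part hg.symm h hc (insert_comm i j Q ▸ hS) ha
        (Set.pair_comm i j ▸ hpartj)
  · push Not at hparti
    obtain ⟨a, ha, hparti⟩ := hparti
    exact card_le_of_right_right_of_part hg h hc hS ha hparti

end IsGallaiPartition

end Partition

section UpperBound

variable {α κ : Type*} {c : Sym2 α → κ} {S : Finset α} {P Q : Finset κ} {i j : κ}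

theorem Admissible.mem_of_joinedIn {A B : Finset α} (hS : Admissible c S P Q)
    (h : JoinedIn c S i A B) (hA : A.Nonempty) (hB : B.Nonempty) : i ∈ P ∨ i ∈ Q := by
  obtain ⟨a, ha⟩ := hA
  obtain ⟨b, hb⟩ := hB
  obtain ⟨rfl, hab⟩ := colorGraph_adj.1 (h.isCompleteBetween ha hb)
  exact hS.color_mem a (h.left_subset ha) b (h.right_subset hb) hab

theorem BoundedOnSSubsets.card_le_of_splits_singleton (h : BoundedOnSSubsets c S)
    (hc : RainbowTriangleFree c) (hsplit : Splits c S {i}) (hS : Admissible c S P Q) :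
    #S ≤ gallaiBound #P #Q := by
  classical
  have ⟨a, ha, _⟩ := hsplit
  rcases hS.mem_of_joinedIn (joinedIn_part_nbhd hc S {i} i a) ⟨a, self_mem_part ha⟩
    (hsplit.nbhd_nonempty ha) with hi | hi
  · rw [← insert_erase hi] at hS
    exact card_erase_add_one hi ▸ h.card_le_of_splits_singleton_left hc hsplit hS
  · rw [← insert_erase hi] at hS
    exact card_erase_add_one hi ▸ h.card_le_of_splits_singleton_right hc hsplit hS

theorem exists_eq_insert_insert [DecidableEq κ] (hij : i ≠ j) (hi : i ∈ P) (hj : j ∈ P) :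
    ∃ P', P = insert i (insert j P') ∧ #P = #P' + 2 := by
  refine ⟨(P.erase i).erase j, ?_, ?_⟩
  · rw [insert_erase (mem_erase.2 ⟨hij.symm, hj⟩), insert_erase hi]
  · have := card_erase_add_one hi
    have := card_erase_add_one (mem_erase.2 ⟨hij.symm, hj⟩)
    omega

theorem IsGallaiPartition.card_le (hg : IsGallaiPartition c S i j) (h : BoundedOnSSubsets c S)
    (hc : RainbowTriangleFree c) (hij : i ≠ j) (hS : Admissible c S P Q) :
    #S ≤ gallaiBound #P #Q := by
  classical
  have ⟨a, ha, _⟩ := hg.splits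
  have hmem {m : κ} := hS.mem_of_joinedIn (joinedIn_part_nbhd hc S {i, j} m a)
    ⟨a, self_mem_part ha⟩
  have hleft_right {i j} (hg : IsGallaiPartition c S i j) (hi : i ∈ P) (hj : j ∈ Q) :
      #S ≤ gallaiBound #P #Q := by
    rw [← insert_erase hi, ← insert_erase hj] at hS
    rw [← card_erase_add_one hi, ← card_erase_add_one hj]
    exact hg.card_le_of_left_right h hc hS
  rcases hmem (hg.nbhd_left_nonempty a ha) with hi | hi <;>
    rcases hmem (hg.nbhd_right_nonempty a ha) with hj | hj
  · obtain ⟨P, rfl, hcard⟩ := exists_eq_insert_insert hij hi hj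
    exact hcard ▸ hg.card_le_of_left_left h hc hS
  · exact hleft_right hg hi hj
  · exact hleft_right hg.symm hj hi
  · obtain ⟨Q, rfl, hcard⟩ := exists_eq_insert_insert hij hi hj
    exact hcard ▸ hg.card_le_of_right_right h hc hS

theorem Admissible.card_le_gallaiBound (hc : RainbowTriangleFree c) (hS : Admissible c S P Q) :
    #S ≤ gallaiBound #P #Q := by
  induction S using Finset.strongInduction generalizing P Q with
  | H S ih =>
  have hbound : BoundedOnSSubsets c S := fun A hA P Q => ih A hA
  by_cases hS' : S.Nontrivial
  · rcases hc.exists_splits_singleton_or_isGallaiPartition hS' with ⟨i, hi⟩ | ⟨i, j, hij, hg⟩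
    · exact hbound.card_le_of_splits_singleton hc hi hS
    · exact hg.card_le hbound hc hij hS
  · rw [← one_lt_card_iff_nontrivial, not_lt] at hS'
    exact hS'.trans (gallaiBound_pos _ _)

end UpperBound

section Transfer

variable {n k : ℕ} {V : Type} {H : SimpleGraph V}

theorem hasMonoCopy_iff_isContained {C : Sym2 (Fin n) → Fin k} {i : Fin k} :
    HasMonoCopy H (fun x y => C s(x, y)) i ↔ H ⊑ colorGraph C i where
  mp := fun ⟨f, hf, hmono⟩ =>
    ⟨⟨f, fun {a b} hab => colorGraph_adj.2 ⟨hmono a b hab, hf.ne hab.ne⟩⟩, hf⟩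
  mpr := fun ⟨f⟩ =>
    ⟨f, f.injective, fun _ _ hab => (colorGraph_adj.1 (f.toHom.map_adj hab)).1⟩

theorem RainbowTriangleFree.isGallaiColoring {C : Sym2 (Fin n) → Fin k}
    (hC : RainbowTriangleFree C) : IsGallaiColoring fun x y => C s(x, y) := by
  refine ⟨fun x y => congrArg C Sym2.eq_swap, ?_⟩
  rintro ⟨x, y, z, hxy, hxz, hyz, h₁, h₂, h₃⟩
  rcases hC hxy hxz hyz with h | h | h
  exacts [h₁ h, h₂ h, h₃ h]

theorem exists_rainbowTriangleFree_of_isGallaiColoring {c : Fin n → Fin n → Fin k}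
    (hc : IsGallaiColoring c) :
    ∃ C : Sym2 (Fin n) → Fin k, RainbowTriangleFree C ∧ c = fun x y => C s(x, y) := by
  refine ⟨Sym2.lift ⟨c, hc.1⟩, fun x y z hxy hxz hyz => ?_, rfl⟩
  by_contra! h
  exact hc.2 ⟨x, y, z, hxy, hxz, hyz, h⟩

theorem forall_isGallaiColoring_iff {F : Fin k → Σ V : Type, SimpleGraph V} :
    (∀ c : Fin n → Fin n → Fin k, IsGallaiColoring c → ∃ i, HasMonoCopy (F i).2 c i) ↔
      ∀ C : Sym2 (Fin n) → Fin k, RainbowTriangleFree C → ∃ i, (F i).2 ⊑ colorGraph C i := by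
  refine ⟨fun h C hC => ?_, fun h c hc => ?_⟩
  · obtain ⟨i, hi⟩ := h _ hC.isGallaiColoring
    exact ⟨i, hasMonoCopy_iff_isContained.1 hi⟩
  · obtain ⟨C, hC, rfl⟩ := exists_rainbowTriangleFree_of_isGallaiColoring hc
    obtain ⟨i, hi⟩ := h C hC
    exact ⟨i, hasMonoCopy_iff_isContained.2 hi⟩

theorem RainbowTriangleFree.comp_map {α β κ : Type*} {c : Sym2 α → κ}
    (hc : RainbowTriangleFree c) (f : β ↪ α) : RainbowTriangleFree (c ∘ Sym2.map f) :=
  fun _ _ _ hxy hxz hyz => hc (f.injective.ne hxy) (f.injective.ne hxz) (f.injective.ne hyz)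

theorem colorGraph_comp_map_isContained {α β κ : Type*} (c : Sym2 α → κ) (f : β ↪ α) (i : κ) :
    colorGraph (c ∘ Sym2.map f) i ⊑ colorGraph c i :=
  ⟨⟨f, fun {x y} h => by simpa [colorGraph_adj] using h⟩, f.injective⟩

theorem GR_eq_card_add_one {F : Fin k → Σ V : Type, SimpleGraph V} {α : Type*} [Fintype α]
    {c : Sym2 α → Fin k} (hc : RainbowTriangleFree c)
    (hlower : ∀ i, (F i).2.Free (colorGraph c i))
    (hupper : ∀ (n : ℕ) (C : Sym2 (Fin n) → Fin k), RainbowTriangleFree C →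
      (∀ i, (F i).2.Free (colorGraph C i)) → n ≤ Fintype.card α) :
    GR k F = Fintype.card α + 1 := by
  simp only [GR, forall_isGallaiColoring_iff]
  refine IsLeast.csInf_eq ⟨fun C hC => ?_, fun n hn => ?_⟩
  · by_contra hfree
    exact (hupper _ C hC fun i hi => hfree ⟨i, hi⟩).not_gt (Nat.lt_succ_self _)
  · by_contra! hlt
    obtain ⟨f⟩ : Nonempty (Fin n ↪ α) :=
      Function.Embedding.nonempty_of_card_le (by simpa using Nat.le_of_lt_succ hlt)
    obtain ⟨i, hi⟩ := hn _ (hc.comp_map f)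
    exact hlower i (hi.trans (colorGraph_comp_map_isContained c f i))

end Transfer

section Upper

variable {n k r : ℕ} {H : SimpleGraph (Fin 5)}

theorem GH2_isContained_of_isClique {V : Type*} {G : SimpleGraph V} {a b v x y : V}
    (hK : G.IsClique {a, b, x, y}) (hnodup : [a, v, b, x, y].Nodup) (hvx : G.Adj v x)
    (hvy : G.Adj v y) : GH2 ⊑ G := by
  have hinj : Function.Injective ![a, v, b, x, y] := by rwa [← List.nodup_ofFn]
  refine ⟨⟨![a, v, b, x, y], fun {s t} hst => ?_⟩, hinj⟩
  have hne := hinj.ne hst.ne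
  simp only [GH2, sdiff_adj, top_adj, fromRel_adj] at hst
  have hadj {u w : V} (hu : u ∈ ({a, b, x, y} : Set V)) (hw : w ∈ ({a, b, x, y} : Set V))
    (huw : u ≠ w) : G.Adj u w := hK hu hw huw
  simp only [Set.mem_insert_iff, Set.mem_singleton_iff] at hadj
  fin_cases s <;> fin_cases t <;> simp at hst hne ⊢ <;> grind [SimpleGraph.Adj.symm]

theorem augmentedCliqueFreeOn_univ_of_free {V : Type*} {G : SimpleGraph V} (h : GH2.Free G) :
    AugmentedCliqueFreeOn G Set.univ 4 1 := by
  classical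
  intro K L _ hK hLK v _ hvK hvL
  by_contra! hL
  obtain ⟨x, hx, y, hy, hxy⟩ := one_lt_card.1 hL
  have hcard : #((K.erase x).erase y) = 2 := by
    rw [card_erase_of_mem (mem_erase.2 ⟨hxy.symm, hLK hy⟩), card_erase_of_mem (hLK hx), hK.card_eq]
  obtain ⟨a, b, hab, heq⟩ := card_eq_two.1 hcard
  have ha : a ∈ (K.erase x).erase y := by simp [heq]
  have hb : b ∈ (K.erase x).erase y := by simp [heq]
  simp only [mem_erase] at ha hb
  have hsub : ({a, b, x, y} : Set V) ⊆ K := by grind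
  exact h (GH2_isContained_of_isClique (hK.isClique.subset hsub) (by grind) (hvL x hx) (hvL y hy))

theorem mixKH_of_lt {i : Fin k} (hi : (i : ℕ) < r) : mixKH k r H i = ⟨Fin 5, H⟩ :=
  if_pos hi

theorem mixKH_of_not_lt {i : Fin k} (hi : ¬(i : ℕ) < r) : mixKH k r H i = ⟨Fin 3, GK3⟩ :=
  if_neg hi

theorem free_completeGraph_iff {V : Type*} {G : SimpleGraph V} :
    (completeGraph (Fin n)).Free G ↔ G.CliqueFree n := by
  rw [cliqueFree_iff, Free, IsContained, not_nonempty_iff]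

theorem free_GK3_iff {V : Type*} {G : SimpleGraph V} : GK3.Free G ↔ G.CliqueFree 3 :=
  free_completeGraph_iff

theorem card_filter_not_val_lt : #{i : Fin k | ¬(i : ℕ) < r} = k - r := by
  have := card_filter_add_card_filter_not (s := univ) (fun i : Fin k => (i : ℕ) < r)
  rw [Fin.card_filter_val_lt, card_univ, Fintype.card_fin] at this
  omega

theorem forall_mixKH_free_iff {V : Type*} {G : Fin k → SimpleGraph V} :
    (∀ i, (mixKH k r H i).2.Free (G i)) ↔
      (∀ i : Fin k, ¬(i : ℕ) < r → (G i).CliqueFree 3) ∧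
        ∀ i : Fin k, (i : ℕ) < r → H.Free (G i) := by
  refine ⟨fun h => ⟨fun i hi => ?_, fun i hi => ?_⟩, fun h i => ?_⟩
  · have := h i
    rwa [mixKH_of_not_lt hi, free_GK3_iff] at this
  · have := h i
    rwa [mixKH_of_lt hi] at this
  · by_cases hi : (i : ℕ) < r
    · rw [mixKH_of_lt hi]
      exact h.2 i hi
    · rw [mixKH_of_not_lt hi, free_GK3_iff]
      exact h.1 i hi

theorem card_le_gallaiBound_of_free (hH : H ⊑ GH2)
    {C : Sym2 (Fin n) → Fin k} (hC : RainbowTriangleFree C)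
    (hfree : ∀ i, (mixKH k r H i).2.Free (colorGraph C i)) : n ≤ gallaiBound (k - r) r := by
  rw [forall_mixKH_free_iff] at hfree
  have hadm : Admissible C univ ({i | ¬(i : ℕ) < r} : Finset (Fin k)) {i | (i : ℕ) < r} := by
    refine ⟨fun x _ y _ _ => by simp [le_or_gt], fun i hi => ?_, fun i hi => ?_⟩
    · rw [coe_univ, cliqueFreeOn_univ]
      exact hfree.1 i ((mem_filter_univ i).1 hi)
    · rw [coe_univ]
      exact augmentedCliqueFreeOn_univ_of_free fun h =>
        hfree.2 i ((mem_filter_univ i).1 hi) (hH.trans h)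
  have := hadm.card_le_gallaiBound hC
  rw [card_univ, Fintype.card_fin, card_filter_not_val_lt, Fin.card_filter_val_lt] at this
  exact this.trans (gallaiBound_mono le_rfl (min_le_right k r))

end Upper

/-! ### The lower bound -/

section Lexicographic

variable {α β κ V : Type*} {c : Sym2 α → κ} {d : Sym2 β → κ} {i : κ} {n : ℕ} {x y : α × β}

open Classical in
/-- The lexicographic product of two colourings: every vertex of the colouring `d` is replaced by a
copy of the colouring `c`. -/
noncomputable def lexColoring (c : Sym2 α → κ) (d : Sym2 β → κ) : Sym2 (α × β) → κ :=
  Sym2.lift ⟨fun x y => if x.2 = y.2 then c s(x.1, y.1) else d s(x.2, y.2), fun x y => by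
    simp only [eq_comm (a := x.2), Sym2.eq_swap (a := x.1), Sym2.eq_swap (a := x.2)]⟩

theorem lexColoring_of_eq (h : x.2 = y.2) : lexColoring c d s(x, y) = c s(x.1, y.1) :=
  if_pos h

theorem lexColoring_of_ne (h : x.2 ≠ y.2) : lexColoring c d s(x, y) = d s(x.2, y.2) :=
  if_neg h

theorem RainbowTriangleFree.lexColoring (hc : RainbowTriangleFree c) (hd : RainbowTriangleFree d) :
    RainbowTriangleFree (lexColoring c d) := by
  intro x y z hxy hxz hyz
  by_cases hxy₂ : x.2 = y.2 <;> by_cases hxz₂ : x.2 = z.2 <;> by_cases hyz₂ : y.2 = z.2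
  · simp only [lexColoring_of_eq, hxy₂, hyz₂]
    exact hc (fun h => hxy (Prod.ext h hxy₂)) (fun h => hxz (Prod.ext h hxz₂))
      fun h => hyz (Prod.ext h hyz₂)
  · exact absurd (hxy₂.symm.trans hxz₂) hyz₂
  · exact absurd (hxy₂.trans hyz₂) hxz₂
  · simp only [lexColoring_of_ne hxz₂, lexColoring_of_ne hyz₂, hxy₂, or_true]
  · exact absurd (hxz₂.trans hyz₂.symm) hxy₂
  · simp only [lexColoring_of_ne hxy₂, lexColoring_of_ne hyz₂, hxz₂, Sym2.eq_swap, true_or, or_true]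
  · simp only [lexColoring_of_ne hxy₂, lexColoring_of_ne hxz₂, hyz₂, true_or]
  · simp only [lexColoring_of_ne hxy₂, lexColoring_of_ne hxz₂, lexColoring_of_ne hyz₂]
    exact hd hxy₂ hxz₂ hyz₂

/-- A connected monochromatic subgraph in a colour that `d` does not use lies in a single copy
of `c`. -/
theorem free_colorGraph_lexColoring {F : SimpleGraph V} (hF : F.Preconnected)
    (hc : F.Free (colorGraph c i)) (hd : ∀ ⦃x y⦄, x ≠ y → d s(x, y) ≠ i) :
    F.Free (colorGraph (lexColoring c d) i) := by
  rintro ⟨f⟩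
  have hsnd : ∀ {u v : V}, F.Adj u v → (f u).2 = (f v).2 := fun huv => by
    by_contra hne
    exact hd hne ((lexColoring_of_ne hne).symm.trans (colorGraph_adj.1 (f.toHom.map_adj huv)).1)
  have hconst (u v : V) : (f u).2 = (f v).2 := by
    obtain ⟨p⟩ := hF u v
    induction p with
    | nil => rfl
    | cons huv _ ih => exact (hsnd huv).trans ih
  have hinj : Function.Injective fun v => (f v).1 := fun u v h =>
    f.injective (Prod.ext h (hconst u v))
  refine hc ⟨⟨fun v => (f v).1, fun {u v} huv => ?_⟩, hinj⟩
  have hcol := (colorGraph_adj.1 (f.toHom.map_adj huv)).1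
  exact colorGraph_adj.2 ⟨(lexColoring_of_eq (hconst u v)).symm.trans hcol, hinj.ne huv.ne⟩

theorem cliqueFree_colorGraph_lexColoring (hc : ∀ ⦃x y⦄, x ≠ y → c s(x, y) ≠ i)
    (hd : (colorGraph d i).CliqueFree n) : (colorGraph (lexColoring c d) i).CliqueFree n := by
  rw [cliqueFree_iff, isEmpty_iff] at hd ⊢
  intro f
  have hhom {x y : α × β} (hxy : (colorGraph (lexColoring c d) i).Adj x y) :
      (colorGraph d i).Adj x.2 y.2 := by
    obtain ⟨hcol, hne⟩ := colorGraph_adj.1 hxy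
    by_cases h : x.2 = y.2
    · rw [lexColoring_of_eq h] at hcol
      exact absurd hcol (hc fun h' => hne (Prod.ext h' h))
    · exact colorGraph_adj.2 ⟨(lexColoring_of_ne h).symm.trans hcol, h⟩
  let g : completeGraph (Fin n) →g colorGraph d i :=
    ⟨fun v => (f v).2, fun huv => hhom (f.toHom.map_adj huv)⟩
  exact hd ⟨g, g.injective_of_top_hom⟩

variable {F : SimpleGraph V}

/-- A Gallai colouring with colours in `P ∪ Q` that contains neither a triangle in a colour
from `P` nor a copy of `F` in a colour from `Q`. -/
structure Avoids (F : SimpleGraph V) (c : Sym2 α → κ) (P Q : Finset κ) : Prop where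
  rainbowTriangleFree : RainbowTriangleFree c
  color_mem : ∀ ⦃x y⦄, x ≠ y → c s(x, y) ∈ P ∨ c s(x, y) ∈ Q
  cliqueFree : ∀ i ∈ P, (colorGraph c i).CliqueFree 3
  free : ∀ i ∈ Q, F.Free (colorGraph c i)

theorem Avoids.color_ne [DecidableEq κ] {P Q : Finset κ} (h : Avoids F c P Q) (hi : i ∉ P ∪ Q)
    ⦃x y : α⦄ (hxy : x ≠ y) : c s(x, y) ≠ i := by
  rintro rfl
  exact hi (mem_union.2 (h.color_mem hxy))

theorem Avoids.lexColoring [DecidableEq κ] {P P' Q Q' : Finset κ}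
    (hF : F.Preconnected) (hF' : completeGraph (Fin n) ⊑ F) (hc : Avoids F c P Q)
    (hd : Avoids (completeGraph (Fin n)) d P' Q') (hdisj : Disjoint (P ∪ Q) (P' ∪ Q')) :
    Avoids F (lexColoring c d) (P ∪ P') (Q ∪ Q') where
  rainbowTriangleFree := hc.rainbowTriangleFree.lexColoring hd.rainbowTriangleFree
  color_mem x y hxy := by
    by_cases h : x.2 = y.2
    · rw [lexColoring_of_eq h]
      have := hc.color_mem fun h' => hxy (Prod.ext h' h)
      grind
    · rw [lexColoring_of_ne h]
      have := hd.color_mem h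
      grind
  cliqueFree i hi := by
    rcases mem_union.1 hi with hi | hi
    · have hfree := hc.cliqueFree i hi
      rw [← free_GK3_iff] at hfree ⊢
      exact free_colorGraph_lexColoring preconnected_top hfree
        (hd.color_ne (disjoint_left.1 hdisj (mem_union_left Q hi)))
    · exact cliqueFree_colorGraph_lexColoring
        (hc.color_ne (disjoint_right.1 hdisj (mem_union_left Q' hi))) (hd.cliqueFree i hi)
  free i hi := by
    rcases mem_union.1 hi with hi | hi
    · exact free_colorGraph_lexColoring hF (hc.free i hi)
        (hd.color_ne (disjoint_left.1 hdisj (mem_union_right P hi)))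
    · have hfree := hd.free i hi
      rw [free_completeGraph_iff] at hfree
      have := cliqueFree_colorGraph_lexColoring
        (hc.color_ne (disjoint_right.1 hdisj (mem_union_right P' hi))) hfree
      exact fun h => free_completeGraph_iff.2 this (hF'.trans h)

end Lexicographic

section Paley

variable {R : Type*}

theorem circulantGraph_cliqueFree_succ [AddGroup R] {s : Set R} {n : ℕ}
    (h : (circulantGraph s).CliqueFreeOn ((circulantGraph s).neighborSet 0) n) :
    (circulantGraph s).CliqueFree (n + 1) := by
  classical
  intro K hK
  obtain ⟨v, hv⟩ : K.Nonempty := card_pos.1 (by rw [hK.card_eq]; exact n.succ_pos)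
  have hadj {x y : R} (hx : x ∈ K) (hy : y ∈ K) (hxy : x ≠ y) :
      (circulantGraph s).Adj (x + -v) (y + -v) :=
    circulantGraph_adj_translate.2 (hK.isClique hx hy hxy)
  refine h (t := (K.erase v).map (Equiv.addRight (-v)).toEmbedding) ?_ ⟨?_, ?_⟩
  · intro y hy
    obtain ⟨x, hx, rfl⟩ := mem_map.1 hy
    simpa using hadj hv (mem_of_mem_erase hx) (ne_of_mem_erase hx).symm
  · rw [coe_map]
    rintro _ ⟨x, hx, rfl⟩ _ ⟨y, hy, rfl⟩ hxy
    exact hadj (mem_of_mem_erase hx) (mem_of_mem_erase hy) fun h => hxy (h ▸ rfl)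
  · rw [card_map, card_erase_of_mem hv, hK.card_eq, Nat.add_sub_cancel]

/-- The Paley graph, symmetrised so that no condition on `-1` is needed. -/
def paleyGraph (R : Type*) [Ring R] : SimpleGraph R :=
  circulantGraph {x | IsSquare x}

theorem paleyGraph_adj [Ring R] {x y : R} :
    (paleyGraph R).Adj x y ↔ x ≠ y ∧ (IsSquare (x - y) ∨ IsSquare (y - x)) := by
  simp [paleyGraph]

theorem exists_ne_zero_forall_isSquare_mul (R : Type*) [Field R] [Finite R] :
    ∃ a ≠ (0 : R), ∀ x, ¬IsSquare x → IsSquare (a * x) := by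
  classical
  have := Fintype.ofFinite R
  by_cases h : ∀ x : R, IsSquare x
  · exact ⟨1, one_ne_zero, fun x hx => absurd (h x) hx⟩
  · push Not at h
    obtain ⟨a, ha⟩ := h
    refine ⟨a, fun h0 => ha (h0 ▸ IsSquare.zero), fun x hx => ?_⟩
    rw [← quadraticChar_neg_one_iff_not_isSquare] at ha hx
    by_contra hax
    rw [← quadraticChar_neg_one_iff_not_isSquare, map_mul, ha, hx] at hax
    norm_num at hax

theorem compl_paleyGraph_isContained [Field R] [Finite R] : (paleyGraph R)ᶜ ⊑ paleyGraph R := by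
  obtain ⟨a, ha, hmul⟩ := exists_ne_zero_forall_isSquare_mul R
  refine ⟨⟨(a * ·), fun {x y} hxy => ?_⟩, mul_right_injective₀ ha⟩
  rw [compl_adj, paleyGraph_adj] at hxy
  rw [paleyGraph_adj, ← mul_sub]
  exact ⟨(mul_right_injective₀ ha).ne hxy.1, Or.inl (hmul _ (by tauto))⟩

instance [Ring R] [Fintype R] [DecidableEq R] : DecidableRel (paleyGraph R).Adj :=
  fun _ _ => decidable_of_iff _ paleyGraph_adj.symm

theorem cliqueFree_paleyGraph_five : (paleyGraph (ZMod 5)).CliqueFree 3 := by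
  refine circulantGraph_cliqueFree_succ ((cliqueFreeOn_two _).2 fun x hx y hy _ => ?_)
  exact (by decide : ∀ x, (paleyGraph (ZMod 5)).Adj 0 x →
    ∀ y, (paleyGraph (ZMod 5)).Adj 0 y → ¬(paleyGraph (ZMod 5)).Adj x y) x hx y hy

theorem cliqueFree_paleyGraph_seventeen : (paleyGraph (ZMod 17)).CliqueFree 4 := by
  refine circulantGraph_cliqueFree_succ fun K hK hclique => ?_
  obtain ⟨x, y, z, hxy, hxz, hyz, rfl⟩ := is3Clique_iff.1 hclique
  exact (by decide : ∀ x, (paleyGraph (ZMod 17)).Adj 0 x → ∀ y, (paleyGraph (ZMod 17)).Adj 0 y →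
    (paleyGraph (ZMod 17)).Adj x y → ∀ z, (paleyGraph (ZMod 17)).Adj 0 z →
    (paleyGraph (ZMod 17)).Adj x z → ¬(paleyGraph (ZMod 17)).Adj y z)
    x (hK (by simp)) y (hK (by simp)) hxy z (hK (by simp)) hxz hyz

end Paley

section Blocks

variable {α κ V : Type*} {G : SimpleGraph α} {F : SimpleGraph V} {i j : κ}

open Classical in
/-- The colouring with the edges of `G` in colour `i` and all other edges in colour `j`. -/
noncomputable def twoColoring (G : SimpleGraph α) (i j : κ) : Sym2 α → κ :=
  fun e => if e ∈ G.edgeSet then i else j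

theorem twoColoring_eq_or (e : Sym2 α) : twoColoring G i j e = i ∨ twoColoring G i j e = j := by
  unfold twoColoring
  split_ifs <;> simp

theorem colorGraph_twoColoring_left (hij : i ≠ j) : colorGraph (twoColoring G i j) i = G := by
  ext x y
  simpa [colorGraph_adj, twoColoring, hij.symm] using G.ne_of_adj

theorem colorGraph_twoColoring_right (hij : i ≠ j) : colorGraph (twoColoring G i j) j = Gᶜ := by
  ext x y
  simp [colorGraph_adj, twoColoring, hij, and_comm]

theorem rainbowTriangleFree_twoColoring : RainbowTriangleFree (twoColoring G i j) := by
  intro x y z _ _ _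
  have := twoColoring_eq_or (G := G) (i := i) (j := j)
  grind

theorem avoids_twoColoring_left [DecidableEq κ] (hij : i ≠ j) (hG : G.CliqueFree 3)
    (hG' : Gᶜ.CliqueFree 3) : Avoids F (twoColoring G i j) {i, j} ∅ where
  rainbowTriangleFree := rainbowTriangleFree_twoColoring
  color_mem x y _ := by simpa using twoColoring_eq_or s(x, y)
  cliqueFree k hk := by
    rcases mem_insert.1 hk with rfl | hk
    · rwa [colorGraph_twoColoring_left hij]
    · rwa [mem_singleton.1 hk, colorGraph_twoColoring_right hij]
  free := by simp

theorem avoids_twoColoring_right [DecidableEq κ] (hij : i ≠ j) (hG : F.Free G)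
    (hG' : F.Free Gᶜ) : Avoids F (twoColoring G i j) ∅ {i, j} where
  rainbowTriangleFree := rainbowTriangleFree_twoColoring
  color_mem x y _ := by simpa using twoColoring_eq_or s(x, y)
  cliqueFree := by simp
  free k hk := by
    rcases mem_insert.1 hk with rfl | hk
    · rwa [colorGraph_twoColoring_left hij]
    · rwa [mem_singleton.1 hk, colorGraph_twoColoring_right hij]

theorem rainbowTriangleFree_const (i : κ) : RainbowTriangleFree fun _ : Sym2 α => i :=
  fun _ _ _ _ _ _ => Or.inl rfl

theorem avoids_const_left [Fintype α] (hα : Fintype.card α < 3) (i : κ) :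
    Avoids F (fun _ : Sym2 α => i) {i} ∅ where
  rainbowTriangleFree := rainbowTriangleFree_const i
  color_mem _ _ _ := by simp
  cliqueFree _ _ := cliqueFree_of_card_lt hα
  free := by simp

theorem avoids_const_right [Fintype α] [Fintype V] (hα : Fintype.card α < Fintype.card V) (i : κ) :
    Avoids F (fun _ : Sym2 α => i) ∅ {i} where
  rainbowTriangleFree := rainbowTriangleFree_const i
  color_mem _ _ _ := by simp
  cliqueFree := by simp
  free _ _ := fun ⟨f⟩ => (Fintype.card_le_of_injective f f.injective).not_gt hα

theorem avoids_empty [Subsingleton α] (c : Sym2 α → κ) : Avoids F c ∅ ∅ where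
  rainbowTriangleFree x y _ hxy := absurd (Subsingleton.elim x y) hxy
  color_mem x y hxy := absurd (Subsingleton.elim x y) hxy
  cliqueFree := by simp
  free := by simp

theorem avoids_paleyGraph_five [DecidableEq κ] (hij : i ≠ j) :
    Avoids F (twoColoring (paleyGraph (ZMod 5)) i j) {i, j} ∅ :=
  have : Fact (Nat.Prime 5) := ⟨Nat.prime_five⟩
  avoids_twoColoring_left hij cliqueFree_paleyGraph_five
    (cliqueFree_paleyGraph_five.comap compl_paleyGraph_isContained)

theorem avoids_paleyGraph_seventeen [DecidableEq κ] (hij : i ≠ j) :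
    Avoids (completeGraph (Fin 4)) (twoColoring (paleyGraph (ZMod 17)) i j) ∅ {i, j} :=
  have : Fact (Nat.Prime 17) := ⟨by decide⟩
  avoids_twoColoring_right hij (free_completeGraph_iff.2 cliqueFree_paleyGraph_seventeen)
    (free_completeGraph_iff.2 (cliqueFree_paleyGraph_seventeen.comap compl_paleyGraph_isContained))

end Blocks

section Lower

variable {κ V : Type*} {F : SimpleGraph V} {P P' Q Q' : Finset κ} {N : ℕ}

/-- There is a colouring of a complete graph of order `N` as in `Avoids`. -/
def Attains (F : SimpleGraph V) (P Q : Finset κ) (N : ℕ) : Prop :=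
  ∃ (α : Type) (_ : Fintype α) (c : Sym2 α → κ), Fintype.card α = N ∧ Avoids F c P Q

theorem Attains.mul_card [DecidableEq κ] {n : ℕ} (hF : F.Preconnected)
    (hF' : completeGraph (Fin n) ⊑ F) {β : Type} [Fintype β] {d : Sym2 β → κ}
    (h : Attains F P Q N) (hd : Avoids (completeGraph (Fin n)) d P' Q')
    (hdisj : Disjoint (P' ∪ Q') (P ∪ Q)) :
    Attains F (P' ∪ P) (Q' ∪ Q) (Fintype.card β * N) := by
  obtain ⟨α, _, c, rfl, hc⟩ := h
  refine ⟨α × β, inferInstance, lexColoring c d, ?_, ?_⟩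
  · rw [Fintype.card_prod, mul_comm]
  · rw [union_comm P', union_comm Q']
    exact hc.lexColoring hF hF' hd hdisj.symm

theorem insert_insert_induction [DecidableEq κ] {p : Finset κ → Prop} (empty : p ∅)
    (singleton : ∀ i, p {i})
    (insert_insert : ∀ i j S, i ≠ j → i ∉ S → j ∉ S → p S → p (insert i (insert j S)))
    (S : Finset κ) : p S := by
  induction S using Finset.strongInduction with
  | H S ih =>
  obtain rfl | ⟨i, hi⟩ := S.eq_empty_or_nonempty
  · exact empty
  obtain h | ⟨j, hj⟩ := (S.erase i).eq_empty_or_nonempty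
  · rw [← insert_erase hi, h]
    exact singleton i
  · rw [← insert_erase hi, ← insert_erase hj]
    have hsub : (S.erase i).erase j ⊂ S := (erase_ssubset hj).trans (erase_ssubset hi)
    exact insert_insert i j _ (ne_of_mem_erase hj).symm (by simp) (by simp) (ih _ hsub)

theorem GH1_preconnected : GH1.Preconnected := by
  have h (x : Fin 5) (hx : x ≠ 3) : GH1.Adj x 3 := by
    revert x
    simp only [GH1, fromRel_adj]
    decide
  have h' (x : Fin 5) : GH1.Reachable x 3 := by
    by_cases hx : x = 3
    · rw [hx]
    · exact (h x hx).reachable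
  exact fun x y => (h' x).trans (h' y).symm

theorem completeGraph_isContained_GH1 : completeGraph (Fin 4) ⊑ GH1 := by
  refine ⟨⟨Fin.castSucc, fun {x y} hxy => ?_⟩, Fin.castSucc_injective 4⟩
  revert x y
  simp only [GH1, fromRel_adj, top_adj]
  decide

variable [Nonempty κ]

theorem attains_gallaiBound_empty_left (Q : Finset κ) : Attains GH1 ∅ Q (gallaiBound 0 #Q) := by
  classical
  induction Q using insert_insert_induction with
  | empty =>
    exact ⟨Unit, inferInstance, Classical.arbitrary _, by simp [gallaiBound], avoids_empty _⟩
  | singleton i =>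
    exact ⟨Fin 4, inferInstance, _, by simp [gallaiBound], avoids_const_right (by simp) i⟩
  | insert_insert i j Q hij hi hj ih =>
    have := ih.mul_card GH1_preconnected completeGraph_isContained_GH1
      (avoids_paleyGraph_seventeen hij) (by simp [hi, hj])
    rw [card_insert_of_notMem (by simp [hij, hi]), card_insert_of_notMem hj,
      gallaiBound_add_two_right]
    simpa [insert_union] using this

theorem attains_gallaiBound (hPQ : Disjoint P Q) : Attains GH1 P Q (gallaiBound #P #Q) := by
  classical
  induction P using insert_insert_induction with
  | empty => exact attains_gallaiBound_empty_left Q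
  | singleton i =>
    have := (attains_gallaiBound_empty_left Q).mul_card GH1_preconnected
      completeGraph_isContained_GH1 (avoids_const_left (α := Fin 2) (by simp) i)
      (by simpa using hPQ)
    simpa [gallaiBound] using this
  | insert_insert i j P hij hi hj ih =>
    simp only [disjoint_insert_left] at hPQ
    have := (ih hPQ.2.2).mul_card GH1_preconnected completeGraph_isContained_GH1
      (avoids_paleyGraph_five hij) (by simp [hi, hj, hPQ])
    rw [card_insert_of_notMem (by simp [hij, hi]), card_insert_of_notMem hj,
      gallaiBound_add_two_left]
    simpa [insert_union] using this

end Lower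

section Final

theorem GH1_isContained_GH2 : GH1 ⊑ GH2 := by
  have hinj : Function.Injective ![(0 : Fin 5), 2, 3, 4, 1] := by decide
  refine ⟨⟨_, fun {x y} hxy => ?_⟩, hinj⟩
  revert x y
  simp only [GH1, GH2, sdiff_adj, top_adj, fromRel_adj]
  decide

end Final

end GallaiRamsey

theorem GR_mixKH_even_even_general (H : SimpleGraph (Fin 5)) (h₁ : GH1 ⊑ H) (h₂ : H ⊑ GH2)
    (k r : ℕ) (hk : 1 ≤ k) (hr : r ≤ k) :
    GR k (mixKH k r H) = GallaiRamsey.gallaiBound (k - r) r + 1 := by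
  have : NeZero k := ⟨by omega⟩
  obtain ⟨α, _, c, hcard, hc⟩ := GallaiRamsey.attains_gallaiBound
    (Finset.disjoint_filter_filter_not .univ .univ fun i : Fin k => (i : ℕ) < r).symm
  rw [GallaiRamsey.card_filter_not_val_lt, Fin.card_filter_val_lt, min_eq_right hr] at hcard
  rw [← hcard]
  refine GallaiRamsey.GR_eq_card_add_one hc.rainbowTriangleFree
    (GallaiRamsey.forall_mixKH_free_iff.2 ⟨fun i hi => ?_, fun i hi => ?_⟩) fun n C hC hfree => ?_
  · exact hc.cliqueFree i (by simpa using hi)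
  · exact fun h => hc.free i (by simpa using hi) (h₁.trans h)
  · exact hcard ▸ GallaiRamsey.card_le_gallaiBound_of_free h₂ hC hfree

/-- Theorem 1.4, case (a₁): for H ∈ {H₁, H₂}, k ≥ 1, 0 ≤ r ≤ k with k - r and r both
even, GR_k((k-r)K₃, rH) = 5^((k-r)/2)·17^(r/2) + 1. -/
theorem GR_mixKH_even_even (H : SimpleGraph (Fin 5)) (hH : H = GH1 ∨ H = GH2)
    (k r : ℕ) (hk : 1 ≤ k) (hr : r ≤ k) (h1 : Even (k - r)) (h2 : Even r) :
    GR k (mixKH k r H) = 5 ^ ((k - r) / 2) * 17 ^ (r / 2) + 1 := by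
  rw [← GallaiRamsey.gallaiBound_of_even h1 h2]
  rcases hH with rfl | rfl
  · exact GR_mixKH_even_even_general GH1 .rfl GallaiRamsey.GH1_isContained_GH2 k r hk hr
  · exact GR_mixKH_even_even_general GH2 GallaiRamsey.GH1_isContained_GH2 .rfl k r hk hr
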